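/- arXiv:0712.2177 — 2 statements merged into one kernel-verified Lean document; each statement's English description precedes it below -/
import Mathlib

section
/- Assume q̄′ is not the zero polynomial in K[X] (i.e. q̄ is not purely inseparable). If R = −1, then Φ is a Fubini function on F×F. -/
noncomputable section

open MeasureTheory Polynomial
open scoped Classical

/-- The field `ℂ(X)` of complex rational functions. -/
abbrev CX : Type := RatFunc ℂ

/-- A complete discrete valuation field with residue field `K`:
`Fc` is the field, `O` its ring of integers, `t` a fixed prime element,
`res` the residue map and `ν` the discrete valuation.  The axioms say that `O` is a
valuation subring of `Fc`, `t` is irreducible in `O`, `res` is surjective with kernel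
`tO`, every nonzero element is a unit times `t ^ ν`, and `O` is `t`-adically complete. -/
structure CDVF (K : Type) [Field K] : Type 1 where
  Fc : Type
  fieldF : Field Fc
  O : Subring Fc
  t : Fc
  ht : t ∈ O
  res : O →+* K
  ν : Fc → ℤ
  hval : ∀ x : Fc, x ∈ O ∨ x⁻¹ ∈ O
  hirr : Irreducible (⟨t, ht⟩ : O)
  hres_surj : Function.Surjective res
  hres_ker : ∀ x : O, res x = 0 ↔ (⟨t, ht⟩ : O) ∣ x
  hν : ∀ x : Fc, x ≠ 0 → ∃ u : O, IsUnit u ∧ x = (u : Fc) * t ^ ν x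
  hcomplete : ∀ s : ℕ → O, (∀ n : ℕ, (⟨t, ht⟩ : O) ^ n ∣ (s (n + 1) - s n)) →
    ∃ L : O, ∀ n : ℕ, (⟨t, ht⟩ : O) ^ n ∣ (L - s n)

attribute [instance] CDVF.fieldF

namespace CDVF

variable {K : Type} [Field K] (E : CDVF K)

/-- The residue map, extended by zero outside the ring of integers. -/
def resF (x : E.Fc) : K := if h : x ∈ E.O then E.res ⟨x, h⟩ else 0

/-- The translated fractional ideal `a + t^c O`. -/
def tfi (a : E.Fc) (c : ℤ) : Set E.Fc := {y : E.Fc | ∃ z ∈ E.O, y = a + E.t ^ c * z}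

/-- The lift `f⁰` of a function on the residue field. -/
def lift0 (f : K → ℂ) : E.Fc → CX := fun x =>
  if x ∈ E.O then algebraMap ℂ CX (f (E.resF x)) else 0

/-- The lift `f^{a,n}` of `f` at `a, n`, determined by `f^{a,n}(a + t^n x) = f⁰(x)`. -/
def liftAt (f : K → ℂ) (a : E.Fc) (n : ℤ) : E.Fc → CX := fun z =>
  E.lift0 f (E.t ^ (-n) * (z - a))

/-- The two-dimensional lift `f⁰` of `f : K × K → ℂ`. -/
def lift0₂ (f : K × K → ℂ) : E.Fc → E.Fc → CX := fun x y =>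
  if x ∈ E.O ∧ y ∈ E.O then algebraMap ℂ CX (f (E.resF x, E.resF y)) else 0

/-- The lift of `f : K × K → ℂ` at `(a₁,a₂),(n₁,n₂)`. -/
def liftAt₂ (f : K × K → ℂ) (a₁ a₂ : E.Fc) (n₁ n₂ : ℤ) : E.Fc → E.Fc → CX := fun z w =>
  E.lift0₂ f (E.t ^ (-n₁) * (z - a₁)) (E.t ^ (-n₂) * (w - a₂))

/-- The space `L(F)` of integrable functions on `F`: the `ℂ(X)`-span of the lifts
`f^{a,n}` of Haar integrable functions `f` on the residue field. -/
def LF [MeasurableSpace K] (μ : Measure K) : Submodule CX (E.Fc → CX) :=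
  Submodule.span CX
    {g : E.Fc → CX | ∃ f : K → ℂ, Integrable f μ ∧ ∃ (a : E.Fc) (n : ℤ), g = E.liftAt f a n}

/-- `Φ(x,y) = f⁰(x, y − t^R q(x))`. -/
def Phi (f : K × K → ℂ) (R : ℤ) (q : Polynomial E.O) : E.Fc → E.Fc → CX := fun x y =>
  E.lift0₂ f x (y - E.t ^ R * Polynomial.eval x (q.map E.O.subtype))

/-- The non-singular part `Φ_ns` of `Φ`: the restriction of `Φ` to `W_ns × F`,
extended by zero, where `W_ns = {x ∈ O : q̄′(x̄) ≠ 0}`. -/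
def PhiNS (f : K × K → ℂ) (R : ℤ) (q : Polynomial E.O) : E.Fc → E.Fc → CX := fun x y =>
  if x ∈ E.O ∧ Polynomial.eval (E.resF x) (Polynomial.derivative (q.map E.res)) ≠ 0 then
    E.Phi f R q x y else 0

/-- The singular part `Φ_sing` of `Φ`: the restriction of `Φ` to `W_sing × F`,
extended by zero, where `W_sing = {x ∈ O : q̄′(x̄) = 0}`. -/
def PhiSing (f : K × K → ℂ) (R : ℤ) (q : Polynomial E.O) : E.Fc → E.Fc → CX := fun x y =>
  if x ∈ E.O ∧ Polynomial.eval (E.resF x) (Polynomial.derivative (q.map E.res)) = 0 then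
    E.Phi f R q x y else 0

end CDVF

section Normed

variable {K : Type} [NontriviallyNormedField K]

/-- The absolute value `|α| = |res(α t^{−ν(α)})|_K ⬝ X^{ν(α)} ∈ ℂ(X)` of `α ∈ F^×`. -/
def CDVF.absF (E : CDVF K) (α : E.Fc) : CX :=
  algebraMap ℂ CX ((‖E.resF (α * E.t ^ (-E.ν α))‖ : ℝ) : ℂ) * RatFunc.X ^ E.ν α

/-- Schwartz–Bruhat functions on `K × K` (for nonarchimedean `K`: the locally constant
functions of compact support). -/
def IsSB (f : K × K → ℂ) : Prop := IsLocallyConstant f ∧ HasCompactSupport f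

variable [MeasurableSpace K] (μ : Measure K)

/-- A Haar integrable `f : K × K → ℂ` is Fubini: both repeated integrals exist and agree. -/
def KFubini (f : K × K → ℂ) : Prop :=
  Integrable f (μ.prod μ) ∧
  (∀ u : K, Integrable (fun v => f (u, v)) μ) ∧
  (∀ v : K, Integrable (fun u => f (u, v)) μ) ∧
  Integrable (fun u => ∫ v, f (u, v) ∂μ) μ ∧
  Integrable (fun v => ∫ u, f (u, v) ∂μ) μ ∧
  (∫ u, ∫ v, f (u, v) ∂μ ∂μ) = ∫ v, ∫ u, f (u, v) ∂μ ∂μ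

/-- `I` is the two-dimensional integral `∫^F` on `L(F)`: a `ℂ(X)`-linear functional which
lifts the Haar integral, is translation invariant, and is compatible with multiplicative
structure. -/
def CDVF.IsIntegralF (E : CDVF K) (I : (E.Fc → CX) →ₗ[CX] CX) : Prop :=
  (∀ f : K → ℂ, Integrable f μ → I (E.lift0 f) = algebraMap ℂ CX (∫ u, f u ∂μ)) ∧
  (∀ g ∈ E.LF μ, ∀ a : E.Fc, I (fun x => g (x + a)) = I g) ∧
  (∀ g ∈ E.LF μ, ∀ α : E.Fc, α ≠ 0 → I (fun x => g (α * x)) = (E.absF α)⁻¹ * I g)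

/-- A `ℂ(X)`-valued function on `F × F` is Fubini (with respect to the integral `I`):
all sections and repeated integrands are integrable and the two repeated integrals agree. -/
def CDVF.FFubini (E : CDVF K) (I : (E.Fc → CX) →ₗ[CX] CX) (g : E.Fc → E.Fc → CX) : Prop :=
  (∀ x : E.Fc, (fun y => g x y) ∈ E.LF μ) ∧
  ((fun x => I (fun y => g x y)) ∈ E.LF μ) ∧
  (∀ y : E.Fc, (fun x => g x y) ∈ E.LF μ) ∧
  ((fun y => I (fun x => g x y)) ∈ E.LF μ) ∧
  I (fun x => I (fun y => g x y)) = I (fun y => I (fun x => g x y))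

/-- The conclusion of the change-of-variables conjecture for the data
`a₁, a₂, n₁, n₂, h`: for every Schwartz–Bruhat `f` on `K × K`, with `g` the lift of `f` at
`(a₁,a₂),(n₁,n₂)`, the function `(x,y) ↦ g(x, y − h(x))` is Fubini on `F × F` with
repeated integral `∫∫ f du dv ⬝ X^{n₁+n₂}`. -/
def CDVF.ConjHolds (E : CDVF K) (I : (E.Fc → CX) →ₗ[CX] CX)
    (a₁ a₂ : E.Fc) (n₁ n₂ : ℤ) (h : Polynomial E.Fc) : Prop :=
  ∀ f : K × K → ℂ, IsSB f →
    E.FFubini μ I (fun x y => E.liftAt₂ f a₁ a₂ n₁ n₂ x (y - Polynomial.eval x h)) ∧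
    I (fun y => I (fun x => E.liftAt₂ f a₁ a₂ n₁ n₂ x (y - Polynomial.eval x h))) =
      algebraMap ℂ CX (∫ v, ∫ u, f (u, v) ∂μ ∂μ) * RatFunc.X ^ (n₁ + n₂)

end Normed

/-! Why `Φ` is Fubini for `R = -1`. Write `p = q̄` and `F(u) = ∫ f(u, v) dv`.

For fixed `x ∈ O`, `y ↦ Φ(x, y)` is a translate of the lift of `f(x̄, ·)`, so the integral over `y`
is the lift of `F`, and the repeated integral in this order is `∫ F`.

For fixed `y`, a nonzero value `Φ(x, y)` forces `t y ∈ O` and `p(x̄) = s`, where `s` is the residue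
of `t y` (`CDVF.Phi_eq_zero`). On the residue disc `a + tO` of a root `ω` of `p = s`, the Taylor
expansion of `q` gives `Φ(a + t z, y) = f(ω, d - p'(ω) z̄)` for some `d ∈ K` (`CDVF.Phi_add`). At a
simple root this is a lift at `(a, 1)` with integral `X |p'(ω)|⁻¹ F(ω)`. At a multiple root it is
constant on the disc, that is, the lift of a multiple of the indicator function of the point `ω`;
it is therefore integrable with integral zero. Hence (`CDVF.Phi_section`) the integral over `x` is
`X` times the lift at `(0, -1)` of `fibreSum p F : s ↦ ∑ |p'(ω)|⁻¹ F(ω)`, the sum being over the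
simple roots of `p = s`.

It remains to see that `fibreSum p F` is integrable with integral `∫ F`, which is a change of
variables on `K` (`integral_fibreSum`). The existence of a nonzero `f` satisfying `IsSB` makes `K`
ultrametric (`IsSB.isUltrametricDist`). Away from the finitely many zeros of `p'`, `K` is a
countable disjoint union of balls on which `F` is constant and `p` is a similarity of ratio `|p'|`
onto another ball; since Haar measure scales balls by the norm (`CDVF.IsIntegralF.measure_ball`, a
consequence of the properties of `∫^F`), the identity holds on each such ball and is then summed.
-/

/-! ### Schwartz–Bruhat functions on the residue field -/

lemma IsSB.exists_delta {K : Type} [NontriviallyNormedField K] {f : K × K → ℂ} (hf : IsSB f) :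
    ∃ δ > 0, ∀ z w : K × K, dist z w < δ → f z = f w := by
  obtain ⟨δ, hδ, h⟩ := lebesgue_number_lemma_of_metric (c := fun c : ℂ => f ⁻¹' {c}) hf.2
    (fun c => hf.1 {c}) (fun z _ => by simp)
  have key : ∀ z w : K × K, dist z w < δ → z ∈ tsupport f → f z = f w := by
    intro z w hzw hz
    obtain ⟨c, hc⟩ := h z hz
    have h1 : f z = c := hc (Metric.mem_ball_self hδ)
    have h2 : f w = c := hc (by rwa [Metric.mem_ball, dist_comm])
    rw [h1, h2]
  refine ⟨δ, hδ, fun z w hzw => ?_⟩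
  by_cases hz : z ∈ tsupport f
  · exact key z w hzw hz
  by_cases hw : w ∈ tsupport f
  · exact (key w z (by rwa [dist_comm]) hw).symm
  · rw [image_eq_zero_of_notMem_tsupport hz, image_eq_zero_of_notMem_tsupport hw]

/-- A nonzero Schwartz–Bruhat function is invariant under a nonzero translation `(h, 0)`, hence
under all `(n h, 0)`; compactness of its support bounds the integers in `K`, so the norm of `K`
is ultrametric. Over an archimedean `K` only the zero function satisfies `IsSB`. -/
lemma IsSB.isUltrametricDist {K : Type} [NontriviallyNormedField K] {f : K × K → ℂ}
    (hf : IsSB f) (h0 : f ≠ 0) : IsUltrametricDist K := by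
  obtain ⟨δ, hδ, hinv⟩ := hf.exists_delta
  obtain ⟨z, hz⟩ := Function.ne_iff.mp h0
  obtain ⟨h, hh0, hhδ⟩ := NormedField.exists_norm_lt K hδ
  have hstep : ∀ n : ℕ, f (z.1 + n * h, z.2) = f z := by
    intro n
    induction n with
    | zero => simp
    | succ n ih =>
      rw [← ih]
      apply hinv
      rw [Prod.dist_eq, dist_self, dist_eq_norm]
      have : z.1 + ((n + 1 : ℕ) : K) * h - (z.1 + n * h) = h := by push_cast; ring
      change max ‖z.1 + ((n + 1 : ℕ) : K) * h - (z.1 + n * h)‖ 0 < δ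
      rw [this]
      exact max_lt hhδ hδ
  obtain ⟨C, hC⟩ := hf.2.isBounded.exists_norm_le
  have hb : ∀ n : ℕ, ‖(n : K)‖ ≤ (C + ‖z.1‖) / ‖h‖ := by
    intro n
    have hm : (z.1 + n * h, z.2) ∈ tsupport f := by
      apply subset_tsupport
      rw [Function.mem_support, hstep n]
      exact hz
    have h1 := (norm_fst_le _).trans (hC _ hm)
    rw [le_div_iff₀ hh0, ← norm_mul]
    have h2 := norm_sub_le (z.1 + n * h) z.1
    rw [add_sub_cancel_left] at h2
    simp only at h1
    linarith
  refine IsUltrametricDist.isUltrametricDist_of_forall_norm_natCast_le_one fun n => ?_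
  by_contra! hn
  obtain ⟨k, hk⟩ := pow_unbounded_of_one_lt ((C + ‖z.1‖) / ‖h‖) hn
  have := hb (n ^ k)
  push_cast at this
  rw [norm_pow] at this
  linarith

/-! ### Change of variables on the residue field -/

/-- Near a point where `p'` does not vanish, a polynomial over a complete ultrametric field
scales all distances by the constant `‖p' c‖` and maps small balls onto balls. -/
lemma exists_ball_image {K : Type} [NontriviallyNormedField K] [CompleteSpace K]
    [IsUltrametricDist K] (p : K[X]) (c : K) (hc : p.derivative.eval c ≠ 0) :
    ∃ ε > 0, ∀ r, 0 < r → r ≤ ε →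
      Set.InjOn (fun u => p.eval u) (Metric.ball c r) ∧
      (fun u => p.eval u) '' Metric.ball c r =
        Metric.ball (p.eval c) (‖p.derivative.eval c‖ * r) := by
  set a := p.derivative.eval c with ha
  have ha0 : 0 < ‖a‖ := norm_pos_iff.mpr hc
  obtain ⟨s, hs, happ⟩ := (p.hasStrictDerivAt c).hasStrictFDerivAt.approximates_deriv_on_nhds
    (c := ‖a‖₊ / 2) (Or.inr (half_pos (nnnorm_pos.mpr hc)))
  obtain ⟨ε, hε, hεs⟩ := Metric.mem_nhds_iff.mp hs
  have hlin : ∀ u ∈ Metric.ball c ε, ∀ v ∈ Metric.ball c ε,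
      ‖p.eval u - p.eval v - a * (u - v)‖ ≤ ‖a‖ / 2 * ‖u - v‖ := by
    intro u hu v hv
    have := happ u (hεs hu) v (hεs hv)
    simpa [mul_comm] using this
  have hiso : ∀ u ∈ Metric.ball c ε, ∀ v ∈ Metric.ball c ε,
      ‖p.eval u - p.eval v‖ = ‖a‖ * ‖u - v‖ := by
    intro u hu v hv
    rcases eq_or_ne u v with rfl | huv
    · simp
    have h1 := hlin u hu v hv
    have h2 : 0 < ‖u - v‖ := norm_pos_iff.mpr (sub_ne_zero.mpr huv)
    rw [← norm_mul, ← norm_neg (a * (u - v))]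
    apply IsUltrametricDist.norm_eq_of_add_norm_lt_max
    rw [norm_neg, ← sub_eq_add_neg]
    refine lt_of_lt_of_le ?_ (le_max_right _ _)
    rw [norm_mul]
    nlinarith [mul_pos ha0 h2]
  refine ⟨ε, hε, fun r hr hrε => ?_⟩
  have hsub := Metric.ball_subset_ball (x := c) hrε
  have hcr := Metric.mem_ball_self (x := c) hr
  refine ⟨fun u hu v hv huv => ?_, ?_⟩
  · have := hiso u (hsub hu) v (hsub hv)
    simp only at huv
    rw [huv, sub_self, norm_zero, eq_comm, mul_eq_zero, or_iff_right ha0.ne'] at this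
    exact sub_eq_zero.mp (norm_eq_zero.mp this)
  · apply Set.Subset.antisymm
    · rintro _ ⟨u, hu, rfl⟩
      rw [Metric.mem_ball, dist_eq_norm, hiso u (hsub hu) c (hsub hcr)]
      have : ‖u - c‖ < r := by rwa [← dist_eq_norm]
      gcongr
    · intro y hy
      rw [Metric.mem_ball, dist_eq_norm] at hy
      -- Newton iteration with the fixed slope `a`
      let g : K → K := fun u => u - (p.eval u - y) / a
      have hg : Set.MapsTo g (Metric.ball c r) (Metric.ball c r) := by
        intro u hu
        have e : g u - c = (u - c) + (-((p.eval u - p.eval c) / a) + (y - p.eval c) / a) := by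
          simp only [g]; ring
        have hu' : ‖u - c‖ < r := by rwa [← dist_eq_norm]
        rw [Metric.mem_ball, dist_eq_norm, e]
        refine (IsUltrametricDist.norm_add_le_max _ _).trans_lt (max_lt hu'
          ((IsUltrametricDist.norm_add_le_max _ _).trans_lt (max_lt ?_ ?_)))
        · rw [norm_neg, norm_div, hiso u (hsub hu) c (hsub hcr), mul_div_cancel_left₀ _ ha0.ne']
          exact hu'
        · rw [norm_div, div_lt_iff₀ ha0, mul_comm]
          exact hy
      have hctr : ContractingWith (1 / 2) (hg.restrict g _ _) := by
        refine ⟨by rw [← NNReal.coe_lt_coe]; norm_num, LipschitzWith.of_dist_le_mul fun u v => ?_⟩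
        have e : g u - g v = -((p.eval (u : K) - p.eval (v : K) - a * (u - v)) / a) := by
          simp only [g]; field_simp; ring
        rw [Subtype.dist_eq, Subtype.dist_eq, dist_eq_norm, dist_eq_norm]
        simp only [Set.MapsTo.val_restrict_apply]
        rw [e, norm_neg, norm_div, div_le_iff₀ ha0]
        have := hlin u (hsub u.2) v (hsub v.2)
        push_cast
        linarith
      obtain ⟨u, hu, hfix, -⟩ := ContractingWith.exists_fixedPoint'
        (IsUltrametricDist.isClosed_ball c r).isComplete hg hctr hcr (edist_ne_top _ _)
      refine ⟨u, hu, ?_⟩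
      have h1 : u - (p.eval u - y) / a = u := hfix
      have h2 : (p.eval u - y) / a = 0 := by linear_combination -h1
      rw [div_eq_zero_iff, or_iff_left hc] at h2
      exact sub_eq_zero.mp h2

/-- A pointwise convergent series of integrable functions whose `L¹` norms are summable has
integrable sum. -/
lemma integrable_of_hasSum {α ι : Type*} [MeasurableSpace α] {μ : Measure α} [Countable ι]
    {T : ι → α → ℂ} {G : α → ℂ} (hT : ∀ i, Integrable (T i) μ)
    (hs : Summable fun i => ∫ a, ‖T i a‖ ∂μ) (hG : ∀ s, HasSum (fun i => T i s) (G s)) :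
    Integrable G μ := by
  constructor
  · refine aestronglyMeasurable_of_tendsto_ae Filter.atTop
      (f := fun (S : Finset ι) s => ∑ i ∈ S, T i s) (fun S => ?_) (Filter.Eventually.of_forall hG)
    exact (integrable_finsetSum S fun i _ => hT i).1
  · have hle : ∀ s, ‖G s‖ₑ ≤ ∑' i, ‖T i s‖ₑ := by
      intro s
      rw [← (hG s).tsum_eq]
      exact enorm_tsum_le_tsum_enorm
    refine (lintegral_mono hle).trans_lt ?_
    rw [lintegral_tsum fun i => (hT i).1.enorm]
    have : ∀ i, ∫⁻ a, ‖T i a‖ₑ ∂μ = ENNReal.ofReal (∫ a, ‖T i a‖ ∂μ) := fun i =>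
      (ofReal_integral_norm_eq_lintegral_enorm (hT i)).symm
    simp_rw [this]
    exact hs.tsum_ofReal_lt_top

/-- Sum of `F` over the simple roots of `p = s`, weighted by the inverse Jacobian: the density of
the push-forward of `F` along `p`. -/
def fibreSum {K : Type} [NontriviallyNormedField K] (p : K[X]) (F : K → ℂ) (s : K) : ℂ :=
  ∑ ω ∈ (p - C s).roots.toFinset.filter (fun w => p.derivative.eval w ≠ 0),
    ((‖p.derivative.eval ω‖⁻¹ : ℝ) : ℂ) * F ω

/-- A set on which `F` is a constant, `‖p'‖` is a nonzero constant `a`, and `p` is injective and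
multiplies volume by `a`. -/
def GoodSet {K : Type} [NontriviallyNormedField K] [MeasurableSpace K] (μ : Measure K) (p : K[X])
    (F : K → ℂ) (B : Set K) : Prop :=
  ∃ (κ : ℂ) (a : ℝ), 0 < a ∧ (∀ u ∈ B, F u = κ ∧ ‖p.derivative.eval u‖ = a) ∧
    Set.InjOn (fun u => p.eval u) B ∧ MeasurableSet ((fun u => p.eval u) '' B) ∧
    μ ((fun u => p.eval u) '' B) ≠ ⊤ ∧ μ.real ((fun u => p.eval u) '' B) = a * μ.real B

section ChangeOfVariables

variable {K : Type} [NontriviallyNormedField K] [MeasurableSpace K] [BorelSpace K]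
  [LocallyCompactSpace K] [IsUltrametricDist K] (μ : Measure K) [Measure.IsAddHaarMeasure μ]

lemma exists_goodSet
    (hsc : ∀ a : K, a ≠ 0 → ∀ (r : ℝ) (c c' : K),
      μ.real (Metric.ball c (‖a‖ * r)) = ‖a‖ * μ.real (Metric.ball c' r))
    (p : K[X]) (F : K → ℂ) (hF : IsLocallyConstant F) (c : K)
    (hc : p.derivative.eval c ≠ 0) :
    ∃ n : ℕ, GoodSet μ p F (Metric.ball c (1 / ((n : ℝ) + 1))) := by
  have : ProperSpace K := ProperSpace.of_locallyCompactSpace K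
  obtain ⟨ε, hε, hball⟩ := exists_ball_image p c hc
  obtain ⟨ε₁, hε₁, h₁⟩ := Metric.mem_nhds_iff.mp ((hF.eventually_eq c))
  have hcont : Filter.Tendsto (fun u => ‖p.derivative.eval u - p.derivative.eval c‖) (nhds c)
      (nhds 0) := by
    have : Continuous fun u => ‖p.derivative.eval u - p.derivative.eval c‖ := by fun_prop
    simpa using this.tendsto c
  obtain ⟨ε₂, hε₂, h₂⟩ := Metric.mem_nhds_iff.mp
    (hcont.eventually_lt_const (norm_pos_iff.mpr hc))
  obtain ⟨n, hn⟩ := exists_nat_one_div_lt (lt_min hε (lt_min hε₁ hε₂))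
  have hr : (0 : ℝ) < 1 / ((n : ℝ) + 1) := by positivity
  obtain ⟨hinj, himg⟩ := hball _ hr (hn.le.trans (min_le_left _ _))
  refine ⟨n, F c, ‖p.derivative.eval c‖, norm_pos_iff.mpr hc, fun u hu => ⟨?_, ?_⟩, hinj, ?_⟩
  · exact h₁ (Metric.ball_subset_ball
      (hn.le.trans ((min_le_right _ _).trans (min_le_left _ _))) hu)
  · have h3 : ‖p.derivative.eval u - p.derivative.eval c‖ < ‖p.derivative.eval c‖ :=
      h₂ (Metric.ball_subset_ball
        (hn.le.trans ((min_le_right _ _).trans (min_le_right _ _))) hu)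
    rw [← norm_neg (p.derivative.eval c)]
    apply IsUltrametricDist.norm_eq_of_add_norm_lt_max
    rw [← sub_eq_add_neg, norm_neg]
    exact h3.trans_le (le_max_right _ _)
  · rw [himg]
    exact ⟨measurableSet_ball, measure_ball_lt_top.ne, hsc _ hc _ _ _⟩

/-- Change of variables `s = p(u)` for a locally constant integrable `F`. -/
lemma integral_fibreSum
    (hsc : ∀ a : K, a ≠ 0 → ∀ (r : ℝ) (c c' : K),
      μ.real (Metric.ball c (‖a‖ * r)) = ‖a‖ * μ.real (Metric.ball c' r))
    (p : K[X]) (hp : p.derivative ≠ 0) (F : K → ℂ)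
    (hF : IsLocallyConstant F) (hFi : Integrable F μ) :
    Integrable (fibreSum p F) μ ∧ ∫ s, fibreSum p F s ∂μ = ∫ u, F u ∂μ := by
  have : ProperSpace K := ProperSpace.of_locallyCompactSpace K
  have : SecondCountableTopology K := secondCountable_of_proper
  have hroots : ∀ s w : K, w ∈ (p - C s).roots.toFinset.filter
      (fun w => p.derivative.eval w ≠ 0) ↔ p.eval w = s ∧ p.derivative.eval w ≠ 0 := by
    intro s w
    have h0 : p - C s ≠ 0 := by
      intro h
      apply hp
      rw [sub_eq_zero.mp h, derivative_C]
    rw [Finset.mem_filter, Multiset.mem_toFinset, mem_roots h0, IsRoot.def, eval_sub, eval_C,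
      sub_eq_zero]
  set N : Set K := {u | p.derivative.eval u ≠ 0} with hN
  have hex := exists_goodSet μ hsc p F hF
  -- the largest good ball centred at `c`, among the radii `1 / (n + 1)`
  let n : K → ℕ := fun c =>
    if h : ∃ n : ℕ, GoodSet μ p F (Metric.ball c (1 / ((n : ℝ) + 1))) then Nat.find h else 0
  let β : K → Set K := fun c => Metric.ball c (1 / ((n c : ℝ) + 1))
  have hr : ∀ m : ℕ, (0 : ℝ) < 1 / ((m : ℝ) + 1) := fun m => by positivity
  have hβgood : ∀ c ∈ N, GoodSet μ p F (β c) := by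
    intro c hc
    have h := hex c hc
    simp only [β, n, dif_pos h]
    exact Nat.find_spec h
  have hnmin : ∀ c, ∀ m : ℕ, GoodSet μ p F (Metric.ball c (1 / ((m : ℝ) + 1))) → n c ≤ m := by
    intro c m hm
    have h : ∃ m : ℕ, GoodSet μ p F (Metric.ball c (1 / ((m : ℝ) + 1))) := ⟨m, hm⟩
    simp only [n, dif_pos h]
    exact Nat.find_min' h hm
  have hself : ∀ c, c ∈ β c := fun c => Metric.mem_ball_self (hr _)
  have hgoodN : ∀ B, GoodSet μ p F B → B ⊆ N := by
    rintro B ⟨κ, a, ha, hB, -⟩ u hu h0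
    rw [← (hB u hu).2, h0, norm_zero] at ha
    exact ha.false
  have hle : ∀ w v, w ∈ N → v ∈ β w → n v ≤ n w := by
    intro w v hw hv
    apply hnmin
    rw [← IsUltrametricDist.ball_eq_of_mem hv]
    exact hβgood w hw
  have hβeq : ∀ w v, w ∈ N → v ∈ β w → β v = β w := by
    intro w v hw hv
    have hvN : v ∈ N := hgoodN _ (hβgood w hw) hv
    have h1 := hle w v hw hv
    have h2 : w ∈ β v := by
      have h3 : w ∈ Metric.ball v (1 / ((n w : ℝ) + 1)) := by
        rwa [Metric.mem_ball, dist_comm]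
      refine Metric.ball_subset_ball ?_ h3
      gcongr
    have h4 := hle v w hvN h2
    have h5 : n v = n w := le_antisymm h1 h4
    have h6 := IsUltrametricDist.ball_eq_of_mem hv
    simp only [β, h5]
    exact h6.symm
  let 𝓑 : Set (Set K) := β '' N
  have hmem : ∀ B ∈ 𝓑, ∀ w ∈ B, w ∈ N ∧ B = β w := by
    rintro _ ⟨c, hc, rfl⟩ w hw
    exact ⟨hgoodN _ (hβgood c hc) hw, (hβeq c w hc hw).symm⟩
  have hdisj : 𝓑.PairwiseDisjoint id := by
    intro B hB B' hB' hne
    refine Set.disjoint_left.mpr fun w hw hw' => hne ?_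
    rw [(hmem B hB w hw).2, (hmem B' hB' w hw').2]
  have hopen : ∀ B ∈ 𝓑, IsOpen B := by
    rintro _ ⟨c, hc, rfl⟩
    exact Metric.isOpen_ball
  have hcount : 𝓑.Countable := hdisj.countable_of_isOpen hopen (by
    rintro _ ⟨c, hc, rfl⟩
    exact ⟨c, hself c⟩)
  have : Countable 𝓑 := hcount.to_subtype
  have hgood : ∀ B : 𝓑, GoodSet μ p F B := by
    rintro ⟨_, c, hc, rfl⟩
    exact hβgood c hc
  choose κ a ha hconst hinj hmeas hfin hvol using hgood
  have hUnion : ⋃ B : 𝓑, (B : Set K) = N := by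
    apply Set.Subset.antisymm
    · exact Set.iUnion_subset fun B => hgoodN _ ⟨κ B, a B, ha B, hconst B, hinj B, hmeas B,
        hfin B, hvol B⟩
    · intro c hc
      exact Set.mem_iUnion.mpr ⟨⟨β c, c, hc, rfl⟩, hself c⟩
  have hNc : μ Nᶜ = 0 := by
    have : Nᶜ ⊆ (p.derivative.roots.toFinset : Set K) := by
      intro u hu
      have hu' : p.derivative.eval u = 0 := not_not.mp hu
      simp [hp, hu']
    exact measure_mono_null this (Finset.measure_zero _ μ)
  have hNmeas : MeasurableSet N := by
    rw [← hUnion]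
    exact MeasurableSet.iUnion fun B => (hopen B B.2).measurableSet
  have hNae : ∀ g : K → ℂ, ∫ u in N, g u ∂μ = ∫ u, g u ∂μ := by
    intro g
    apply setIntegral_eq_integral_of_ae_compl_eq_zero
    have : ∀ᵐ u ∂μ, u ∈ N := by rwa [ae_iff]
    filter_upwards [this] with u hu hu'
    exact absurd hu hu'
  have hpd : Pairwise (Function.onFun Disjoint fun B : 𝓑 => (B : Set K)) :=
    fun B B' hne => hdisj B.2 B'.2 (Subtype.coe_injective.ne hne)
  have hBm : ∀ B : 𝓑, MeasurableSet (B : Set K) := fun B => (hopen B B.2).measurableSet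
  have hsumF : HasSum (fun B : 𝓑 => ∫ u in (B : Set K), F u ∂μ) (∫ u, F u ∂μ) := by
    rw [← hNae F, ← hUnion]
    exact hasSum_integral_iUnion hBm hpd hFi.integrableOn
  have hsumN : Summable fun B : 𝓑 => ∫ u in (B : Set K), ‖F u‖ ∂μ :=
    (hasSum_integral_iUnion hBm hpd hFi.norm.integrableOn).summable
  let T : 𝓑 → K → ℂ := fun B =>
    ((fun u => p.eval u) '' (B : Set K)).indicator fun _ => (((a B)⁻¹ : ℝ) : ℂ) * κ B
  have hT : ∀ B, Integrable (T B) μ := fun B =>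
    (integrable_indicator_iff (hmeas B)).mpr (integrableOn_const (hfin B))
  have hTint : ∀ B, ∫ s, T B s ∂μ = ∫ u in (B : Set K), F u ∂μ := by
    intro B
    rw [integral_indicator (hmeas B), setIntegral_const, hvol B,
      setIntegral_congr_fun (hBm B) (g := fun _ => κ B) fun u hu => (hconst B u hu).1,
      setIntegral_const]
    have : (a B : ℂ) ≠ 0 := Complex.ofReal_ne_zero.mpr (ha B).ne'
    simp only [Complex.real_smul]
    push_cast
    field_simp
  have hTnorm : ∀ B, ∫ s, ‖T B s‖ ∂μ = ∫ u in (B : Set K), ‖F u‖ ∂μ := by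
    intro B
    simp only [T, norm_indicator_eq_indicator_norm]
    rw [integral_indicator (hmeas B), setIntegral_const, hvol B,
      setIntegral_congr_fun (hBm B) (g := fun _ => ‖κ B‖)
        (fun u hu => by simp only [(hconst B u hu).1]),
      setIntegral_const]
    have := (ha B).ne'
    simp only [smul_eq_mul, norm_mul, Complex.norm_real, norm_inv, Real.norm_of_nonneg (ha B).le]
    field_simp
  have hG : ∀ s, HasSum (fun B => T B s) (fibreSum p F s) := by
    intro s
    set S := (p - C s).roots.toFinset.filter (fun w => p.derivative.eval w ≠ 0) with hS
    have hone : ∀ ω ∈ S, HasSum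
        (fun B : 𝓑 => if ω ∈ (B : Set K) then (((a B)⁻¹ : ℝ) : ℂ) * κ B else 0)
        (((‖p.derivative.eval ω‖⁻¹ : ℝ) : ℂ) * F ω) := by
      intro ω hω
      have hωN : ω ∈ N := ((hroots s ω).mp hω).2
      let B₀ : 𝓑 := ⟨β ω, ω, hωN, rfl⟩
      have hω0 : ω ∈ (B₀ : Set K) := hself ω
      have := hasSum_single (f := fun B : 𝓑 =>
        if ω ∈ (B : Set K) then (((a B)⁻¹ : ℝ) : ℂ) * κ B else 0) B₀ (by
          intro B hB
          rw [if_neg]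
          intro hω'
          exact hB (Subtype.ext (hmem B B.2 ω hω').2))
      rw [(hconst B₀ ω hω0).1, (hconst B₀ ω hω0).2]
      simpa [hω0] using this
    have hall : HasSum _ (fibreSum p F s) := hasSum_sum hone
    convert hall using 1
    funext B
    by_cases hs : ∃ ω ∈ (B : Set K), p.eval ω = s
    · obtain ⟨ω, hω, hωs⟩ := hs
      have hωS : ω ∈ S := (hroots s ω).mpr ⟨hωs, (hmem B B.2 ω hω).1⟩
      rw [Finset.sum_eq_single_of_mem ω hωS, if_pos hω]
      · have hmemi : s ∈ (fun u => p.eval u) '' (B : Set K) := ⟨ω, hω, hωs⟩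
        exact Set.indicator_of_mem hmemi _
      · intro v hv hne
        rw [if_neg]
        intro hvB
        exact hne (hinj B hvB hω (((hroots s v).mp hv).1.trans hωs.symm))
    · rw [Finset.sum_eq_zero]
      · have hmemi : s ∉ (fun u => p.eval u) '' (B : Set K) := hs
        exact Set.indicator_of_notMem hmemi _
      · intro ω hω
        exact if_neg fun h => hs ⟨ω, h, ((hroots s ω).mp hω).1⟩
  have hTsum : Summable fun B => ∫ s, ‖T B s‖ ∂μ := by simpa only [hTnorm] using hsumN
  refine ⟨integrable_of_hasSum hT hTsum hG, ?_⟩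
  have h1 := hasSum_integral_of_summable_integral_norm hT hTsum
  simp only [(hG _).tsum_eq, hTint] at h1
  exact h1.unique hsumF

end ChangeOfVariables

/-! ### The lifted integral -/

namespace CDVF

section Algebra

variable {K : Type} [Field K] (E : CDVF K)

/-- The prime element `t` as an element of the ring of integers. -/
def τ : E.O := ⟨E.t, E.ht⟩

lemma t_ne_zero : E.t ≠ 0 := fun h => E.hirr.ne_zero (Subtype.ext h)

lemma res_τ : E.res E.τ = 0 := (E.hres_ker _).mpr dvd_rfl

lemma resF_coe (x : E.O) : E.resF x = E.res x := dif_pos x.2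

lemma isUnit_of_res_ne_zero (x : E.O) (hx : E.res x ≠ 0) : IsUnit x := by
  have hx0 : (x : E.Fc) ≠ 0 := fun h => hx (by
    rw [show x = 0 from Subtype.ext h, map_zero])
  obtain ⟨u, hu, hxu⟩ := E.hν x hx0
  rcases lt_trichotomy (E.ν x) 0 with h | h | h
  · exfalso
    obtain ⟨k, hk⟩ := Int.exists_eq_neg_ofNat h.le
    have hk0 : k ≠ 0 := by rintro rfl; simp [hk] at h
    have hmul : x * E.τ ^ k = u := by
      apply Subtype.ext
      push_cast
      rw [hxu, hk, zpow_neg, zpow_natCast]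
      exact inv_mul_cancel_right₀ (pow_ne_zero k E.t_ne_zero) _
    have hτ : IsUnit (E.τ ^ k) := isUnit_of_mul_isUnit_right (hmul ▸ hu)
    exact E.hirr.not_isUnit ((isUnit_pow_iff hk0).mp hτ)
  · have : x = u := Subtype.ext (by rw [hxu, h, zpow_zero, mul_one])
    exact this ▸ hu
  · exfalso
    obtain ⟨k, hk⟩ := Int.eq_ofNat_of_zero_le h.le
    have hk0 : k ≠ 0 := by rintro rfl; simp [hk] at h
    have hmul : x = u * E.τ ^ k := by
      apply Subtype.ext
      push_cast
      rw [hxu, hk, zpow_natCast]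
      rfl
    apply hx
    rw [hmul, map_mul, map_pow, res_τ, zero_pow hk0, mul_zero]

lemma eq_zero_of_zpow_eq_unit (k : ℤ) (w : E.O) (hw : IsUnit w) (h : E.t ^ k = w) : k = 0 := by
  have key : ∀ (m : ℕ) (v : E.O), IsUnit v → E.t ^ m = v → m = 0 := by
    intro m v hv hm
    by_contra hm0
    have : E.τ ^ m = v := Subtype.ext (by push_cast; exact hm)
    exact E.hirr.not_isUnit ((isUnit_pow_iff hm0).mp (this ▸ hv))
  rcases Int.eq_nat_or_neg k with ⟨m, rfl | rfl⟩
  · rw [zpow_natCast] at h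
    simp [key m w hw h]
  · obtain ⟨v, hv⟩ := hw.exists_right_inv
    have hv' : (w : E.Fc) * v = 1 := by exact_mod_cast congrArg Subtype.val hv
    have hvu : IsUnit v := IsUnit.of_mul_eq_one w (by rw [mul_comm, hv])
    rw [zpow_neg, zpow_natCast] at h
    have : E.t ^ m = v := by
      rw [← h] at hv'
      exact ((inv_mul_eq_one₀ (pow_ne_zero m E.t_ne_zero)).mp hv')
    simp [key m v hvu this]

lemma ν_unit_mul_zpow (u : E.O) (hu : IsUnit u) (n : ℤ) : E.ν ((u : E.Fc) * E.t ^ n) = n := by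
  have hu0 : (u : E.Fc) ≠ 0 := fun h => hu.ne_zero (Subtype.ext h)
  obtain ⟨v, hv, hx⟩ := E.hν ((u : E.Fc) * E.t ^ n) (mul_ne_zero hu0 (zpow_ne_zero n E.t_ne_zero))
  set m := E.ν ((u : E.Fc) * E.t ^ n)
  obtain ⟨w, hw⟩ := hu.exists_right_inv
  have hw' : (u : E.Fc) * w = 1 := by exact_mod_cast congrArg Subtype.val hw
  have hwu : IsUnit w := IsUnit.of_mul_eq_one u (by rw [mul_comm, hw])
  have : n - m = 0 := by
    apply E.eq_zero_of_zpow_eq_unit (n - m) (w * v) (hwu.mul hv)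
    rw [zpow_sub₀ E.t_ne_zero, div_eq_iff (zpow_ne_zero m E.t_ne_zero)]
    push_cast
    linear_combination (w : E.Fc) * hx - E.t ^ n * hw'
  omega

lemma lift0_coe (f : K → ℂ) (x : E.O) : E.lift0 f x = algebraMap ℂ CX (f (E.res x)) := by
  rw [lift0, if_pos x.2, resF_coe]

lemma liftAt_one_add (g : K → ℂ) (a z : E.O) :
    E.liftAt g a 1 ((a + E.τ * z : E.O) : E.Fc) = algebraMap ℂ CX (g (E.res z)) := by
  rw [liftAt, ← lift0_coe]
  congr 1
  push_cast
  rw [add_sub_cancel_left, zpow_neg_one]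
  exact inv_mul_cancel_left₀ E.t_ne_zero _

lemma liftAt_one_eq_zero (g : K → ℂ) (a : E.O) (x : E.Fc)
    (h : ∀ z : E.O, x ≠ ((a + E.τ * z : E.O) : E.Fc)) : E.liftAt g a 1 x = 0 := by
  rw [liftAt, lift0, if_neg]
  intro hz
  apply h ⟨_, hz⟩
  push_cast
  rw [zpow_neg_one]
  change x = a + E.t * (E.t⁻¹ * (x - a))
  rw [mul_inv_cancel_left₀ E.t_ne_zero, add_sub_cancel]

lemma liftAt_zero_zero (f : K → ℂ) : E.liftAt f 0 0 = E.lift0 f := by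
  funext x
  simp [liftAt]

lemma eval_map_subtype (q : Polynomial E.O) (x : E.O) :
    Polynomial.eval (x : E.Fc) (q.map E.O.subtype) = ((q.eval x : E.O) : E.Fc) := by
  rw [eval_map]
  exact eval₂_at_apply E.O.subtype x

lemma res_eval (q : Polynomial E.O) (x : E.O) :
    E.res (q.eval x) = (q.map E.res).eval (E.res x) := by
  rw [eval_map]
  exact (eval₂_at_apply E.res x).symm

/-- `Φ(x, ·)` is the lift of `f(x̄, ·)` at `t^R q(x), 0`. -/
lemma Phi_coe_left (f : K × K → ℂ) (R : ℤ) (q : Polynomial E.O) (x : E.O) :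
    (fun y => E.Phi f R q x y) =
      E.liftAt (fun v => f (E.res x, v)) (E.t ^ R * (q.eval x : E.O)) 0 := by
  funext y
  rw [Phi, lift0₂, liftAt, lift0, eval_map_subtype, resF_coe]
  simp

lemma Phi_left_notMem (f : K × K → ℂ) (R : ℤ) (q : Polynomial E.O) (x y : E.Fc) (hx : x ∉ E.O) :
    E.Phi f R q x y = 0 := by
  rw [Phi, lift0₂, if_neg fun h => hx h.1]

/-- If `Φ(x, y) ≠ 0` then `t y` is integral and has the same residue as `q(x)`. -/
lemma Phi_eq_zero (f : K × K → ℂ) (q : Polynomial E.O) (x : E.O) (y : E.Fc)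
    (h : ∀ b : E.O, (b : E.Fc) = E.t * y → E.res b ≠ (q.map E.res).eval (E.res x)) :
    E.Phi f (-1) q x y = 0 := by
  rw [Phi, lift0₂, if_neg]
  rintro ⟨-, hw⟩
  rw [eval_map_subtype, zpow_neg_one] at hw
  apply h (q.eval x + E.τ * ⟨_, hw⟩)
  · push_cast
    change ((q.eval x : E.O) : E.Fc) + E.t * (y - E.t⁻¹ * ((q.eval x : E.O) : E.Fc)) = E.t * y
    rw [mul_sub, mul_inv_cancel_left₀ E.t_ne_zero]
    ring
  · rw [map_add, map_mul, res_τ, zero_mul, add_zero, res_eval]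

/-- On the residue disc `a + tO`, `Φ(·, y)` is the lift of an affine substitution in `f(ā, ·)`:
this is the first-order Taylor expansion of `q` at `a`. -/
lemma Phi_add (f : K × K → ℂ) (q : Polynomial E.O) (a z b d : E.O) (y : E.Fc)
    (hb : (b : E.Fc) = E.t * y) (hd : b - q.eval a = E.τ * d) :
    E.Phi f (-1) q ((a + E.τ * z : E.O) : E.Fc) y = algebraMap ℂ CX
      (f (E.res a, E.res d - E.res z * (q.map E.res).derivative.eval (E.res a))) := by
  obtain ⟨k, hk⟩ := q.binomExpansion a (E.τ * z)
  have e : y - E.t ^ (-1 : ℤ) * Polynomial.eval ((a + E.τ * z : E.O) : E.Fc) (q.map E.O.subtype) =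
      ((d - z * q.derivative.eval a - E.τ * (k * z ^ 2) : E.O) : E.Fc) := by
    rw [eval_map_subtype, zpow_neg_one]
    apply mul_left_cancel₀ E.t_ne_zero
    rw [mul_sub, mul_inv_cancel_left₀ E.t_ne_zero, ← hb]
    change ((b - q.eval (a + E.τ * z) : E.O) : E.Fc) = ((E.τ * _ : E.O) : E.Fc)
    congr 1
    linear_combination hd - hk
  rw [Phi, lift0₂, e, if_pos ⟨SetLike.coe_mem _, SetLike.coe_mem _⟩, resF_coe, resF_coe]
  simp only [map_add, map_sub, map_mul, res_τ, zero_mul, add_zero, sub_zero, res_eval,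
    derivative_map]

end Algebra

section Integral

variable {K : Type} [NontriviallyNormedField K] (E : CDVF K)

lemma absF_unit_mul_zpow (u : E.O) (hu : IsUnit u) (n : ℤ) :
    E.absF ((u : E.Fc) * E.t ^ n) =
      algebraMap ℂ CX ((‖E.res u‖ : ℝ) : ℂ) * RatFunc.X ^ n := by
  rw [absF, E.ν_unit_mul_zpow u hu n, mul_assoc, ← zpow_add₀ E.t_ne_zero, add_neg_cancel, zpow_zero,
    mul_one, resF_coe]

variable [MeasurableSpace K] (μ : Measure K)

lemma liftAt_mem_LF {f : K → ℂ} (hf : Integrable f μ) (a : E.Fc) (n : ℤ) :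
    E.liftAt f a n ∈ E.LF μ :=
  Submodule.subset_span ⟨f, hf, a, n, rfl⟩

lemma lift0_mem_LF {f : K → ℂ} (hf : Integrable f μ) : E.lift0 f ∈ E.LF μ :=
  E.liftAt_zero_zero f ▸ E.liftAt_mem_LF μ hf 0 0

variable {μ} {E} {I : (E.Fc → CX) →ₗ[CX] CX}

lemma IsIntegralF.liftAt (hI : E.IsIntegralF μ I) {f : K → ℂ} (hf : Integrable f μ)
    (a : E.Fc) (n : ℤ) :
    I (E.liftAt f a n) = RatFunc.X ^ n * algebraMap ℂ CX (∫ u, f u ∂μ) := by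
  have h1 : E.liftAt f a n = fun x => E.liftAt f 0 n (x + -a) := by
    funext x
    simp [CDVF.liftAt, sub_eq_add_neg]
  have h2 : E.liftAt f 0 n = fun x => E.lift0 f (((1 : E.O) : E.Fc) * E.t ^ (-n) * x) := by
    funext x
    simp [CDVF.liftAt]
  rw [h1, hI.2.1 _ (E.liftAt_mem_LF μ hf 0 n), h2, hI.2.2 _ (E.lift0_mem_LF μ hf), hI.1 f hf,
    E.absF_unit_mul_zpow 1 isUnit_one]
  · simp
  · simpa using zpow_ne_zero _ E.t_ne_zero

/-- Compatibility of `∫^F` with multiplication by units makes the norm of `K` the module of the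
Haar measure. -/
lemma IsIntegralF.integral_comp_mul (hI : E.IsIntegralF μ I) (a : K) (ha : a ≠ 0) {f : K → ℂ}
    (hf : Integrable f μ) (hfa : Integrable (fun u => f (a * u)) μ) :
    ∫ u, f (a * u) ∂μ = ((‖a‖⁻¹ : ℝ) : ℂ) * ∫ u, f u ∂μ := by
  obtain ⟨α, hα⟩ := E.hres_surj a
  have hu : IsUnit α := E.isUnit_of_res_ne_zero α (hα ▸ ha)
  have hα0 : (α : E.Fc) ≠ 0 := fun h => hu.ne_zero (Subtype.ext h)
  obtain ⟨β, hβ⟩ := hu.exists_right_inv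
  have hβ' : (α : E.Fc) * β = 1 := by exact_mod_cast congrArg Subtype.val hβ
  have h1 : (fun x => E.lift0 f (α * x)) = E.lift0 (fun u => f (a * u)) := by
    funext x
    by_cases hx : x ∈ E.O
    · lift x to E.O using hx
      rw [lift0_coe, ← hα, ← map_mul]
      exact E.lift0_coe f (α * x)
    · rw [lift0, lift0, if_neg hx, if_neg]
      intro h
      apply hx
      have := mul_mem β.2 h
      rwa [← mul_assoc, mul_comm (β : E.Fc), hβ', one_mul] at this
  have h2 := hI.2.2 _ (E.lift0_mem_LF μ hf) α hα0
  have h3 := E.absF_unit_mul_zpow α hu 0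
  rw [zpow_zero, mul_one, zpow_zero, mul_one, hα] at h3
  rw [h1, hI.1 _ hfa, hI.1 _ hf, h3, ← map_inv₀, ← map_mul] at h2
  rw [(algebraMap ℂ CX).injective h2]
  push_cast
  rfl

lemma IsIntegralF.measure_ball [BorelSpace K] [LocallyCompactSpace K] [Measure.IsAddHaarMeasure μ]
    (hI : E.IsIntegralF μ I) (a : K) (ha : a ≠ 0) (r : ℝ) (c c' : K) :
    μ.real (Metric.ball c (‖a‖ * r)) = ‖a‖ * μ.real (Metric.ball c' r) := by
  have : ProperSpace K := ProperSpace.of_locallyCompactSpace K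
  have htr : ∀ (c : K) (r : ℝ), μ.real (Metric.ball c r) = μ.real (Metric.ball 0 r) := by
    intro c r
    rw [measureReal_def, measureReal_def, Measure.addHaar_ball_center]
  have hint : ∀ r : ℝ, Integrable ((Metric.ball (0 : K) r).indicator fun _ => (1 : ℂ)) μ :=
    fun r => (integrable_indicator_iff measurableSet_ball).mpr
      (integrableOn_const measure_ball_lt_top.ne)
  have hval : ∀ r : ℝ, ∫ u, (Metric.ball (0 : K) r).indicator (fun _ => (1 : ℂ)) u ∂μ =
      (μ.real (Metric.ball (0 : K) r) : ℂ) := by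
    intro r
    rw [integral_indicator measurableSet_ball, setIntegral_const]
    simp
  have ha0 : 0 < ‖a‖ := norm_pos_iff.mpr ha
  have hcomp : (fun u => (Metric.ball (0 : K) (‖a‖ * r)).indicator (fun _ => (1 : ℂ)) (a * u)) =
      (Metric.ball (0 : K) r).indicator fun _ => (1 : ℂ) := by
    funext u
    simp only [Set.indicator_apply, mem_ball_zero_iff, norm_mul, mul_lt_mul_iff_right₀ ha0]
  have h := hI.integral_comp_mul a ha (hint (‖a‖ * r)) (by rw [hcomp]; exact hint r)
  rw [hcomp, hval, hval] at h
  have h' : μ.real (Metric.ball (0 : K) r) = ‖a‖⁻¹ * μ.real (Metric.ball (0 : K) (‖a‖ * r)) := by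
    exact_mod_cast h
  rw [htr c, htr c', h', mul_inv_cancel_left₀ ha0.ne']

end Integral

end CDVF

/-! ### The integral over x -/

namespace CDVF

section XIntegral

variable {K : Type} [NontriviallyNormedField K] [MeasurableSpace K] [BorelSpace K]
  [LocallyCompactSpace K] {μ : Measure K} [Measure.IsAddHaarMeasure μ] {E : CDVF K}
  {I : (E.Fc → CX) →ₗ[CX] CX}

/-- For `t y` integral with residue `s`, the section `x ↦ Φ(x, y)` is a lift of a finitely
supported (hence null) function, coming from the multiple roots of `q̄ = s`, plus one lift on each
disc `a + tO` around a simple root. -/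
lemma Phi_section (hI : E.IsIntegralF μ I) (q : Polynomial E.O)
    (hq' : Polynomial.derivative (q.map E.res) ≠ 0) {f : K × K → ℂ} (hf : IsSB f)
    (b : E.O) (y : E.Fc) (hb : (b : E.Fc) = E.t * y) :
    (fun x => E.Phi f (-1) q x y) ∈ E.LF μ ∧
      I (fun x => E.Phi f (-1) q x y) = RatFunc.X *
        algebraMap ℂ CX (fibreSum (q.map E.res) (fun u => ∫ v, f (u, v) ∂μ) (E.res b)) := by
  set p := q.map E.res with hp
  have hcomap : ∀ (u : K) (φ : K ≃ₜ K), Integrable (fun v => f (u, φ v)) μ := by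
    intro u φ
    have hemb : Topology.IsClosedEmbedding fun v : K => (u, φ v) :=
      ((Topology.IsClosedEmbedding.of_continuous_injective_isClosedMap
        (Continuous.prodMk_right u) (Prod.mk_right_injective u)
        (isClosedMap_prodMk_left u))).comp φ.isClosedEmbedding
    exact (hf.1.continuous.comp hemb.continuous).integrable_of_hasCompactSupport
      (hf.2.comp_isClosedEmbedding hemb)
  have h0 : p - C (E.res b) ≠ 0 := by
    intro h
    apply hq'
    rw [sub_eq_zero.mp h, derivative_C]
  set S := (p - C (E.res b)).roots.toFinset.filter (fun w => p.derivative.eval w ≠ 0) with hS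
  have hmemS : ∀ w, w ∈ S ↔ p.eval w = E.res b ∧ p.derivative.eval w ≠ 0 := by
    intro w
    rw [Finset.mem_filter, Multiset.mem_toFinset, mem_roots h0, IsRoot.def, eval_sub, eval_C,
      sub_eq_zero]
  obtain ⟨A, hA⟩ := E.hres_surj.hasRightInverse
  have hD : ∀ u : K, ∃ d : E.O, p.eval u = E.res b → b - q.eval (A u) = E.τ * d := by
    intro u
    by_cases hu : p.eval u = E.res b
    · have : E.res (b - q.eval (A u)) = 0 := by
        rw [map_sub, res_eval, hA u, ← hp, hu, sub_self]
      obtain ⟨d, hd⟩ := (E.hres_ker _).mp this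
      exact ⟨d, fun _ => hd⟩
    · exact ⟨0, fun h => absurd h hu⟩
  choose D hD using hD
  let h : K → ℂ := fun u =>
    if p.eval u = E.res b ∧ p.derivative.eval u = 0 then f (u, E.res (D u)) else 0
  let g : K → K → ℂ := fun ω v => f (ω, E.res (D ω) - v * p.derivative.eval ω)
  have hdecomp : (fun x => E.Phi f (-1) q x y) =
      E.lift0 h + ∑ ω ∈ S, E.liftAt (g ω) (A ω) 1 := by
    funext x
    rw [Pi.add_apply, Finset.sum_apply]
    by_cases hx : x ∈ E.O
    · lift x to E.O using hx
      set u := E.res x with hu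
      obtain ⟨z, hz⟩ : ∃ z : E.O, x - A u = E.τ * z := (E.hres_ker _).mp (by
        rw [map_sub, hA, sub_self])
      have hxz : x = A u + E.τ * z := by rw [← hz]; ring
      have hother : ∀ ω, ω ≠ u → E.liftAt (g ω) (A ω) 1 (x : E.Fc) = 0 := by
        intro ω hω
        apply E.liftAt_one_eq_zero
        intro w hw
        have : x = A ω + E.τ * w := Subtype.ext hw
        apply hω
        rw [hu, this, map_add, map_mul, res_τ, zero_mul, add_zero, hA]
      rw [lift0_coe, ← hu]
      by_cases hpu : p.eval u = E.res b
      · have hPhi : E.Phi f (-1) q x y = algebraMap ℂ CX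
            (f (u, E.res (D u) - E.res z * p.derivative.eval u)) := by
          have := E.Phi_add f q (A u) z b (D u) y hb (hD u hpu)
          rwa [← hxz, hA] at this
        rw [hPhi]
        by_cases hd : p.derivative.eval u = 0
        · rw [Finset.sum_eq_zero]
          · simp [h, hpu, hd]
          · intro ω hω
            apply hother
            rintro rfl
            exact ((hmemS _).mp hω).2 hd
        · rw [Finset.sum_eq_single_of_mem u ((hmemS u).mpr ⟨hpu, hd⟩) fun ω _ hω => hother ω hω]
          have hz' := E.liftAt_one_add (g u) (A u) z
          rw [← hxz] at hz'
          rw [hz']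
          simp [h, hd, g]
      · rw [Finset.sum_eq_zero]
        · rw [E.Phi_eq_zero]
          · simp [h, hpu]
          · intro b' hb'
            have : b' = b := Subtype.ext (hb'.trans hb.symm)
            rw [this]
            exact fun h => hpu h.symm
        · intro ω hω
          apply hother
          rintro rfl
          exact hpu ((hmemS _).mp hω).1
    · rw [E.Phi_left_notMem f _ q x y hx, lift0, if_neg hx, zero_add, Finset.sum_eq_zero]
      intro ω _
      apply E.liftAt_one_eq_zero
      rintro z rfl
      exact hx (SetLike.coe_mem _)
  have hh0 : h =ᵐ[μ] 0 := by
    have hsub : {u | ¬ h u = (0 : K → ℂ) u} ⊆ (p.derivative.roots.toFinset : Set K) := by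
      intro u hu
      have hu' : p.derivative.eval u = 0 := by
        by_contra hne
        exact hu (if_neg fun h => hne h.2)
      simp [hq', hu']
    exact measure_mono_null hsub (Finset.measure_zero _ μ)
  have hhi : Integrable h μ := (integrable_zero K ℂ μ).congr hh0.symm
  have hgi : ∀ ω ∈ S, Integrable (g ω) μ := by
    intro ω hω
    have hd := ((hmemS ω).mp hω).2
    exact hcomap ω ((Homeomorph.mulRight₀ _ hd).trans (Homeomorph.subLeft (E.res (D ω))))
  have hgint : ∀ ω ∈ S, ∫ v, g ω v ∂μ =
      ((‖p.derivative.eval ω‖⁻¹ : ℝ) : ℂ) * ∫ v, f (ω, v) ∂μ := by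
    intro ω hω
    have hd := ((hmemS ω).mp hω).2
    have h1 : g ω = fun v => f (ω, E.res (D ω) + (-p.derivative.eval ω) * v) := by
      funext v
      simp only [g]
      congr 2
      ring
    have h2 := hI.integral_comp_mul (-p.derivative.eval ω) (neg_ne_zero.mpr hd)
      (hcomap ω (Homeomorph.addLeft (E.res (D ω)))) (by
        have := hgi ω hω
        rw [h1] at this
        exact this)
    rw [norm_neg] at h2
    rw [h1]
    refine h2.trans ?_
    congr 1
    exact integral_add_left_eq_self (fun v => f (ω, v)) (E.res (D ω))
  rw [hdecomp]
  refine ⟨Submodule.add_mem _ (E.lift0_mem_LF μ hhi)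
    (Submodule.sum_mem _ fun ω hω => E.liftAt_mem_LF μ (hgi ω hω) _ _), ?_⟩
  rw [map_add, hI.1 h hhi, integral_congr_ae hh0, map_sum, fibreSum, map_sum, Finset.mul_sum]
  simp only [Pi.zero_apply, integral_zero, map_zero, zero_add]
  refine Finset.sum_congr rfl fun ω hω => ?_
  rw [hI.liftAt (hgi ω hω), zpow_one, hgint ω hω]

end XIntegral

/-- If `t y` is not integral then `Φ(·, y)` vanishes, because `q` is integral on `O`. -/
lemma Phi_section_eq_zero {K : Type} [NontriviallyNormedField K] (E : CDVF K)
    (q : Polynomial E.O) (f : K × K → ℂ) (y : E.Fc)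
    (hy : E.t * y ∉ E.O) :
    (fun x => E.Phi f (-1) q x y) = 0 := by
  funext x
  by_cases hx : x ∈ E.O
  · lift x to E.O using hx
    exact E.Phi_eq_zero f q x y fun b hb => absurd (hb ▸ b.2) hy
  · exact E.Phi_left_notMem f _ q x y hx

end CDVF

/-! ### The Fubini property -/

/-- If q̄ is not purely inseparable (q̄′ ≠ 0) and R = −1,
then Φ is Fubini on F×F. -/
theorem statement16 {K : Type} [NontriviallyNormedField K] [MeasurableSpace K] [BorelSpace K]
    [LocallyCompactSpace K] (μ : Measure K) [Measure.IsAddHaarMeasure μ]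
    (E : CDVF K) (I : (E.Fc → CX) →ₗ[CX] CX) (hI : E.IsIntegralF μ I)
    (R : ℤ) (hR : R < 0) (q : Polynomial E.O) (hq0 : q.coeff 0 = 0)
    (hqbar : q.map E.res ≠ 0) (f : K × K → ℂ) (hf : IsSB f)
    (hq' : Polynomial.derivative (q.map E.res) ≠ 0) (hR1 : R = -1) :
    E.FFubini μ I (E.Phi f R q) := by
  subst hR1
  by_cases hf0 : f = 0
  · subst hf0
    have : E.Phi (0 : K × K → ℂ) (-1) q = fun _ _ => 0 := by
      funext x y
      simp [CDVF.Phi, CDVF.lift0₂]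
    have hI0 : I (fun _ => (0 : CX)) = 0 := map_zero I
    have hmem : (fun _ => (0 : CX)) ∈ E.LF μ := Submodule.zero_mem _
    rw [this]
    simp only [CDVF.FFubini, hI0]
    exact ⟨fun _ => hmem, hmem, fun _ => hmem, hmem, trivial⟩
  have : IsUltrametricDist K := hf.isUltrametricDist hf0
  set F : K → ℂ := fun u => ∫ v, f (u, v) ∂μ with hF
  obtain ⟨δ, hδ, hinv⟩ := hf.exists_delta
  have hFloc : IsLocallyConstant F := by
    rw [IsLocallyConstant.iff_eventually_eq]
    intro u
    filter_upwards [Metric.ball_mem_nhds u hδ] with w hw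
    refine integral_congr_ae (Filter.Eventually.of_forall fun v => hinv _ _ ?_)
    rw [Prod.dist_eq, dist_self]
    exact max_lt hw hδ
  have hFsupp : HasCompactSupport F := by
    refine HasCompactSupport.intro (hf.2.isCompact.image continuous_fst) fun u hu => ?_
    have : ∀ v, f (u, v) = 0 := fun v =>
      image_eq_zero_of_notMem_tsupport fun h => hu ⟨(u, v), h, rfl⟩
    simp [hF, this]
  have hFi : Integrable F μ := hFloc.continuous.integrable_of_hasCompactSupport hFsupp
  obtain ⟨hGi, hGint⟩ := integral_fibreSum μ (fun a ha => hI.measure_ball a ha) (q.map E.res) hq' F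
    hFloc hFi
  have hsec : ∀ u : K, Integrable (fun v => f (u, v)) μ := by
    intro u
    refine (hf.1.continuous.comp (Continuous.prodMk_right u)).integrable_of_hasCompactSupport ?_
    refine HasCompactSupport.intro (hf.2.isCompact.image continuous_snd) fun v hv => ?_
    exact image_eq_zero_of_notMem_tsupport (f := f) (x := (u, v)) fun h => hv ⟨(u, v), h, rfl⟩
  have hinner₁ : (fun x => I (fun y => E.Phi f (-1) q x y)) = E.lift0 F := by
    funext x
    by_cases hx : x ∈ E.O
    · lift x to E.O using hx
      rw [E.Phi_coe_left, hI.liftAt (hsec _), E.lift0_coe, zpow_zero, one_mul]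
    · simp only [E.Phi_left_notMem f _ q x _ hx]
      rw [CDVF.lift0, if_neg hx]
      exact map_zero I
  have hinner₂ : (fun y => I (fun x => E.Phi f (-1) q x y)) =
      (RatFunc.X : CX) • E.liftAt (fibreSum (q.map E.res) F) 0 (-1) := by
    funext y
    rw [Pi.smul_apply, smul_eq_mul, CDVF.liftAt, neg_neg, zpow_one, sub_zero]
    by_cases hy : E.t * y ∈ E.O
    · rw [(CDVF.Phi_section hI q hq' hf ⟨_, hy⟩ y rfl).2]
      congr 1
      exact (E.lift0_coe _ ⟨_, hy⟩).symm
    · rw [E.Phi_section_eq_zero q f y hy, map_zero, CDVF.lift0, if_neg hy, mul_zero]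
  refine ⟨fun x => ?_, ?_, fun y => ?_, ?_, ?_⟩
  · by_cases hx : x ∈ E.O
    · lift x to E.O using hx
      rw [E.Phi_coe_left]
      exact E.liftAt_mem_LF μ (hsec _) _ _
    · simp only [E.Phi_left_notMem f _ q x _ hx]
      exact Submodule.zero_mem _
  · rw [hinner₁]
    exact E.lift0_mem_LF μ hFi
  · by_cases hy : E.t * y ∈ E.O
    · exact (CDVF.Phi_section hI q hq' hf ⟨_, hy⟩ y rfl).1
    · rw [E.Phi_section_eq_zero q f y hy]
      exact Submodule.zero_mem _
  · rw [hinner₂]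
    exact Submodule.smul_mem _ _ (E.liftAt_mem_LF μ hGi _ _)
  · rw [hinner₁, hinner₂, map_smul, hI.1 F hFi, hI.liftAt hGi, hGint, smul_eq_mul, ← mul_assoc,
      zpow_neg_one, mul_inv_cancel₀ RatFunc.X_ne_zero, one_mul]
end
end

section
/- Let ψ ∈ K[X] be a polynomial whose derivative ψ′ is not the zero polynomial, and let f be a Fubini function on K×K. Define J : K → ℂ by J(v) = Σ_{ω ∈ K : ψ(ω) = v, ψ′(ω) ≠ 0} ∫_K f(ω, −ψ′(ω)u) du (a finite sum, well-defined since every section of f is integrable). Then J is Haar integrable on K and ∫_K J(v) dv = ∫_K∫_K f(ω,u) dω du. -/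
/-!
Write `d(a)` for the inverse modulus of `a ∈ K`, so that `∫ g(a t) dt = d(a) ∫ g`, and
`F(ω) = ∫ f(ω, u) du`. The summand of `J` at `ω` is then `L(ω) = d(-ψ'(ω)) F(ω)`, and the claim
is the change of variables formula for `v = ψ(ω)`, together with the remark that the zeros of `ψ'`
form a null set.

The change of variables is local: every point where `ψ' ≠ 0` has an open neighbourhood `V` on which
`‖ψ x - ψ y‖ ≥ δ ‖x - y‖` for some `δ > 0`. For a continuous function `h` compactly supported
in `V`, let `k` be a tent function on `K` and consider, for scalars `s` with `‖s‖ → ∞`,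
  `∫ ∫ d(s)⁻¹ h(x) k(s (v - ψ x)) dx dv`.
Integrating first in `v` gives `(∫ h) (∫ k)` for every `s`. Integrating first in `x`, after the
substitution `x = x₀ + s⁻¹ t` around the preimage `x₀` of `v`, the inner integral tends to
`h(x₀) ∫ k(-ψ'(x₀) t) dt = d(-ψ'(x₀)) h(x₀) ∫ k`; the expansion property supplies the domination
both in `t` and in `v`. This is `integral_transport`. By uniqueness in the Riesz representation
theorem on `V` it becomes an identity of measures (`comap_withDensity`), and hence holds for
integrable functions carried by measurable subsets of `V` (`integral_piece`).

Finally, the open set `{ψ' ≠ 0}` is a countable disjoint union of measurable pieces `A n`, each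
inside such a `V`. Then `J` is the sum of the functions `G n` obtained by keeping only the roots
in `A n`; since `∫ ‖G n‖ = ∫_{A n} ‖F‖` is summable, `J` is integrable with integral
`∑ ∫_{A n} F = ∫ F`. The argument uses no classification of local fields and no covering theorem.
-/

noncomputable section

open MeasureTheory Polynomial

namespace PolyCoarea

open Filter Topology Set
open scoped NNReal ENNReal

/-! ### The inverse modulus and the tent function -/

variable {K : Type} [NontriviallyNormedField K]

/-- The inverse modulus of `a ∈ K` with respect to the Haar measure `μ`: for `a ≠ 0` it is the
factor `d` such that the image of `μ` under multiplication by `a` is `d • μ`. (Its value at `0`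
is irrelevant.) It is normalised on the closed unit ball. -/
def invMod [MeasurableSpace K] (μ : Measure K) (a : K) : ℝ≥0 :=
  (μ.map (a * ·) (Metric.closedBall 0 1) / μ (Metric.closedBall 0 1)).toNNReal

/-- The tent function `x ↦ max (1 - ‖x‖) 0`, used as a mollifier on `K`. -/
def tent (x : K) : ℝ := max (1 - ‖x‖) 0

lemma tent_nonneg (x : K) : 0 ≤ tent x := le_max_right _ _

lemma tent_le_one (x : K) : tent x ≤ 1 :=
  max_le (by linarith [norm_nonneg x]) zero_le_one

lemma norm_tent_le_one (x : K) : ‖tent x‖ ≤ 1 := by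
  rw [Real.norm_of_nonneg (tent_nonneg x)]; exact tent_le_one x

lemma tent_eq_zero {x : K} (hx : 1 ≤ ‖x‖) : tent x = 0 := max_eq_right (by linarith)

lemma continuous_tent : Continuous (tent : K → ℝ) := by unfold tent; fun_prop

variable [MeasurableSpace K] [BorelSpace K] [ProperSpace K]

omit [MeasurableSpace K] [BorelSpace K] in
lemma hasCompactSupport_tent : HasCompactSupport (tent : K → ℝ) := by
  refine HasCompactSupport.intro (isCompact_closedBall 0 1) fun x hx => tent_eq_zero ?_
  simp only [Metric.mem_closedBall, dist_zero_right, not_le] at hx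
  exact hx.le

variable (μ : Measure K) [Measure.IsAddHaarMeasure μ]

lemma integral_tent_pos : 0 < ∫ x, tent x ∂μ := by
  refine continuous_tent.integral_pos_of_hasCompactSupport_nonneg_nonzero (x := 0)
    hasCompactSupport_tent tent_nonneg ?_
  simp [tent]

lemma map_mul_eq {a : K} (ha : a ≠ 0) : μ.map (a * ·) = invMod μ a • μ := by
  have : Measure.IsAddHaarMeasure (μ.map (a * ·)) :=
    Measure.isAddHaarMeasure_map μ (AddMonoidHom.mulLeft a) (by simp; fun_prop)
      (mul_left_surjective₀ ha)
      (by simpa using (Homeomorph.mulLeft₀ a ha).isClosedEmbedding.tendsto_cocompact)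
  have h := Measure.isAddLeftInvariant_eq_smul (μ.map (a * ·)) μ
  set c := Measure.addHaarScalarFactor (μ.map (a * ·)) μ
  have hb : μ (Metric.closedBall 0 1) ≠ 0 :=
    (Metric.measure_closedBall_pos μ 0 one_pos).ne'
  have hb' : μ (Metric.closedBall 0 1) ≠ ∞ := (isCompact_closedBall 0 1).measure_ne_top
  have : invMod μ a = c := by
    rw [invMod, h, Measure.smul_apply, ENNReal.smul_def, smul_eq_mul,
      ENNReal.mul_div_cancel_right hb hb', ENNReal.toNNReal_coe]
  rw [this]
  exact h

lemma invMod_ne_zero {a : K} (ha : a ≠ 0) : invMod μ a ≠ 0 := by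
  intro h
  have h1 := map_mul_eq μ ha
  rw [h, zero_smul, Measure.map_eq_zero_iff (by fun_prop)] at h1
  exact NeZero.ne μ h1

lemma integral_comp_mul {E : Type*} [NormedAddCommGroup E] [NormedSpace ℝ E] {a : K} (ha : a ≠ 0)
    (g : K → E) : ∫ t, g (a * t) ∂μ = invMod μ a • ∫ t, g t ∂μ := by
  have h := (Homeomorph.mulLeft₀ a ha).measurableEmbedding.integral_map (μ := μ) g
  simp only [Homeomorph.coe_mulLeft₀] at h
  rw [← h, map_mul_eq μ ha, integral_smul_nnreal_measure]

/-- The inverse modulus is, up to a constant, `a ↦ ∫ tent (a t) dt`, which depends continuously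
on `a ≠ 0`. -/
lemma continuousAt_invMod {a : K} (ha : a ≠ 0) : ContinuousAt (invMod μ) a := by
  have hI := integral_tent_pos μ
  have key : ContinuousAt (fun b : K => ∫ t, tent (b * t) ∂μ) a := by
    have ha' : 0 < ‖a‖ := norm_pos_iff.2 ha
    have hev : ∀ᶠ b in 𝓝 a, ‖a‖ / 2 < ‖b‖ :=
      continuous_norm.continuousAt.eventually (lt_mem_nhds (by linarith))
    refine continuousAt_of_dominated
      (bound := (Metric.closedBall (0 : K) (2 / ‖a‖)).indicator fun _ => (1 : ℝ)) ?_ ?_ ?_ ?_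
    · exact Eventually.of_forall fun b =>
        (continuous_tent.comp (by fun_prop : Continuous fun t => b * t)).aestronglyMeasurable
    · filter_upwards [hev] with b hb
      refine Eventually.of_forall fun t => ?_
      by_cases ht : t ∈ Metric.closedBall (0 : K) (2 / ‖a‖)
      · simpa [ht] using norm_tent_le_one (b * t)
      · rw [indicator_of_notMem ht, tent_eq_zero, norm_zero]
        simp only [Metric.mem_closedBall, dist_zero_right, not_le] at ht
        rw [norm_mul]
        calc (1 : ℝ) = ‖a‖ / 2 * (2 / ‖a‖) := by field_simp
          _ ≤ ‖b‖ * ‖t‖ := by gcongr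
    · exact (integrable_indicator_iff Metric.isClosed_closedBall.measurableSet).2
        (integrableOn_const (isCompact_closedBall _ _).measure_ne_top)
    · exact Eventually.of_forall fun t =>
        (continuous_tent.comp (by fun_prop : Continuous fun b => b * t)).continuousAt
  have h2 : ContinuousAt (fun b : K => ((invMod μ b : ℝ≥0) : ℝ)) a := by
    refine (key.div_const (∫ t, tent t ∂μ)).congr ?_
    filter_upwards [isOpen_ne.mem_nhds ha] with b hb
    rw [integral_comp_mul μ hb, NNReal.smul_def, smul_eq_mul, mul_div_cancel_right₀ _ hI.ne']
  exact NNReal.tendsto_coe.1 h2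

/-! ### Mollification and the change of variables for test functions -/

lemma integral_rescale {s : K} (hs : s ≠ 0) (x₁ : K) (g : K → ℝ) :
    (invMod μ s : ℝ)⁻¹ * ∫ x, g x ∂μ = ∫ t, g (x₁ + s⁻¹ * t) ∂μ := by
  have h1 := integral_comp_mul μ hs (fun t => g (x₁ + s⁻¹ * t))
  have h2 : ∫ t, g (x₁ + s⁻¹ * (s * t)) ∂μ = ∫ x, g x ∂μ := by
    simp_rw [inv_mul_cancel_left₀ hs]
    exact integral_add_left_eq_self g x₁
  rw [h2, NNReal.smul_def, smul_eq_mul] at h1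
  rw [h1, inv_mul_cancel_left₀]
  exact_mod_cast invMod_ne_zero μ hs

/-- The mollified family of densities: `mollify μ p h s v x` is `h x` times an approximation, of
width `‖s‖⁻¹`, of `∫ tent` times the Dirac mass at `p x`, evaluated at `v`. -/
def mollify (p : K → K) (h : K → ℝ) (s v x : K) : ℝ :=
  (invMod μ s : ℝ)⁻¹ * (h x * tent (s * (v - p x)))

section mollify

variable {p : K → K} {h : K → ℝ} {s : K}

omit [BorelSpace K] [ProperSpace K] [Measure.IsAddHaarMeasure μ] in
lemma continuous_mollify (hp : Continuous p) (hc : Continuous h) :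
    Continuous (Function.uncurry (mollify μ p h s)) := by
  have := continuous_tent (K := K)
  unfold mollify Function.uncurry
  fun_prop

omit [BorelSpace K] [ProperSpace K] [Measure.IsAddHaarMeasure μ] in
lemma mollify_eq_zero {v x : K} (hx : h x ≠ 0 → 1 ≤ ‖s * (v - p x)‖) : mollify μ p h s v x = 0 := by
  by_cases h0 : h x = 0
  · simp [mollify, h0]
  · simp [mollify, tent_eq_zero (hx h0)]

omit [BorelSpace K] [ProperSpace K] [Measure.IsAddHaarMeasure μ] in
/-- All the mollified densities of width at most one are supported in a common ball. -/
lemma exists_mollify_bound (hp : Continuous p) (hs : HasCompactSupport h) :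
    ∃ R : ℝ, ∀ s : K, 1 ≤ ‖s‖ → ∀ v x, v ∉ Metric.closedBall (0 : K) R →
      mollify μ p h s v x = 0 := by
  obtain ⟨M, hM⟩ := (hs.isCompact.image hp).isBounded.subset_closedBall (0 : K)
  refine ⟨M + 1, fun s hs1 v x hv => mollify_eq_zero μ fun hx => ?_⟩
  have h1 : ‖p x‖ ≤ M := by
    simpa using hM (mem_image_of_mem p (subset_tsupport _ hx))
  simp only [Metric.mem_closedBall, dist_zero_right, not_le] at hv
  have h2 : ‖v‖ ≤ ‖v - p x‖ + ‖p x‖ := by simpa using norm_add_le (v - p x) (p x)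
  rw [norm_mul]
  exact one_le_mul_of_one_le_of_one_le hs1 (by linarith)

omit [BorelSpace K] [Measure.IsAddHaarMeasure μ] in
lemma hasCompactSupport_mollify (hp : Continuous p) (hs : HasCompactSupport h) (hs1 : 1 ≤ ‖s‖) :
    HasCompactSupport (Function.uncurry (mollify μ p h s)) := by
  obtain ⟨R, hR⟩ := exists_mollify_bound μ hp hs
  refine HasCompactSupport.intro ((isCompact_closedBall (0 : K) R).prod hs.isCompact) ?_
  rintro ⟨v, x⟩ hvx
  by_cases hv : v ∈ Metric.closedBall (0 : K) R
  · refine mollify_eq_zero μ fun hx => absurd ?_ hvx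
    exact ⟨hv, subset_tsupport _ hx⟩
  · exact hR s hs1 v x hv

/-- Integrating in `v` first, the total mass does not depend on `s`. -/
lemma integral_integral_mollify (hp : Continuous p) (hc : Continuous h)
    (hs : HasCompactSupport h) (hs1 : 1 ≤ ‖s‖) :
    ∫ v, ∫ x, mollify μ p h s v x ∂μ ∂μ = (∫ x, h x ∂μ) * ∫ t, tent t ∂μ := by
  have hs0 : s ≠ 0 := norm_pos_iff.1 (by linarith)
  rw [integral_integral_swap_of_hasCompactSupport (continuous_mollify μ hp hc)
    (hasCompactSupport_mollify μ hp hs hs1), ← integral_mul_const]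
  congr 1 with x
  have h1 : ∫ v, tent (s * (v - p x)) ∂μ = invMod μ s * ∫ t, tent t ∂μ := by
    rw [integral_sub_right_eq_self (fun v => tent (s * v)), integral_comp_mul μ hs0,
      NNReal.smul_def, smul_eq_mul]
  have h2 : (invMod μ s : ℝ) ≠ 0 := by exact_mod_cast invMod_ne_zero μ hs0
  simp only [mollify, integral_const_mul, h1]
  field_simp

variable {V : Set K} {δ : ℝ}

omit [MeasurableSpace K] [BorelSpace K] [ProperSpace K] in
/-- Since `p` expands distances on `V` by at least `δ`, the mollified densities are concentrated,
after rescaling around any point of `V` mapping close to `v`, on a fixed ball. -/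
lemma norm_integrand_le (hδ : 0 < δ)
    (hanti : ∀ x ∈ V, ∀ y ∈ V, δ * ‖x - y‖ ≤ ‖p x - p y‖) (hV : tsupport h ⊆ V)
    {C : ℝ} (hC : ∀ x, ‖h x‖ ≤ C) {v x₁ : K} (hx₁ : x₁ ∈ V) (hs0 : s ≠ 0)
    (hv : ‖s * (v - p x₁)‖ ≤ 1) (t : K) :
    ‖h (x₁ + s⁻¹ * t) * tent (s * (v - p (x₁ + s⁻¹ * t)))‖ ≤
      (Metric.closedBall (0 : K) (2 / δ)).indicator (fun _ => C) t := by
  by_cases ht : t ∈ Metric.closedBall (0 : K) (2 / δ)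
  · rw [indicator_of_mem ht, norm_mul]
    calc _ ≤ C * 1 := by
          gcongr
          · exact (norm_nonneg _).trans (hC 0)
          · exact hC _
          · exact norm_tent_le_one _
      _ = C := mul_one C
  · rw [indicator_of_notMem ht]
    simp only [Metric.mem_closedBall, dist_zero_right, not_le] at ht
    refine le_of_eq (norm_eq_zero.2 ?_)
    by_cases hx : h (x₁ + s⁻¹ * t) = 0
    · rw [hx, zero_mul]
    · have hx' : x₁ + s⁻¹ * t ∈ V := hV (subset_tsupport _ hx)
      have h1 := hanti _ hx' _ hx₁
      rw [add_sub_cancel_left, norm_mul, norm_inv] at h1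
      have hsn : 0 < ‖s‖ := norm_pos_iff.2 hs0
      have h2 : 2 < ‖s * (p (x₁ + s⁻¹ * t) - p x₁)‖ := by
        rw [norm_mul]
        calc (2 : ℝ) = δ * (2 / δ) := by field_simp
          _ < δ * ‖t‖ := by gcongr
          _ = ‖s‖ * (δ * (‖s‖⁻¹ * ‖t‖)) := by field_simp
          _ ≤ _ := by gcongr
      have h3 : ‖s * (p (x₁ + s⁻¹ * t) - p x₁)‖ ≤
          ‖s * (v - p x₁)‖ + ‖s * (v - p (x₁ + s⁻¹ * t))‖ := by
        rw [show s * (p (x₁ + s⁻¹ * t) - p x₁) =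
          s * (v - p x₁) - s * (v - p (x₁ + s⁻¹ * t)) by ring]
        exact norm_sub_le _ _
      rw [tent_eq_zero (by linarith), mul_zero]

lemma integrable_indicator_ball (R C : ℝ) :
    Integrable ((Metric.closedBall (0 : K) R).indicator fun _ => C) μ :=
  (integrable_indicator_iff Metric.isClosed_closedBall.measurableSet).2
    (integrableOn_const (isCompact_closedBall _ _).measure_ne_top)

lemma integral_mollify_eq (hs0 : s ≠ 0) (v x₁ : K) :
    ∫ x, mollify μ p h s v x ∂μ =
      ∫ t, h (x₁ + s⁻¹ * t) * tent (s * (v - p (x₁ + s⁻¹ * t))) ∂μ := by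
  rw [← integral_rescale μ hs0 x₁ fun x => h x * tent (s * (v - p x)), ← integral_const_mul]
  rfl

/-- The mollified densities at `v` are bounded uniformly in `s` and `v`. -/
lemma norm_integral_mollify_le (hδ : 0 < δ)
    (hanti : ∀ x ∈ V, ∀ y ∈ V, δ * ‖x - y‖ ≤ ‖p x - p y‖) (hV : tsupport h ⊆ V)
    {C : ℝ} (hC : ∀ x, ‖h x‖ ≤ C) (hs0 : s ≠ 0) (v : K) :
    ‖∫ x, mollify μ p h s v x ∂μ‖ ≤
      ∫ t, (Metric.closedBall (0 : K) (2 / δ)).indicator (fun _ => C) t ∂μ := by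
  by_cases hex : ∃ x₁ ∈ V, ‖s * (v - p x₁)‖ ≤ 1
  · obtain ⟨x₁, hx₁, hv⟩ := hex
    rw [integral_mollify_eq μ hs0 v x₁]
    exact norm_integral_le_of_norm_le (integrable_indicator_ball μ _ _)
      (Eventually.of_forall fun t => norm_integrand_le hδ hanti hV hC hx₁ hs0 hv t)
  · push Not at hex
    have : ∀ x, mollify μ p h s v x = 0 := fun x => mollify_eq_zero μ fun hx =>
      (hex x (hV (subset_tsupport _ hx))).le
    simp only [this, integral_zero, norm_zero]
    exact integral_nonneg fun t => indicator_nonneg (fun _ _ => (norm_nonneg _).trans (hC 0)) t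

end mollify

/-- Change of variables for a continuous test function `h` compactly supported in a set `V` on
which `p` is differentiable, with nonvanishing derivative, and expands distances by at least
`δ > 0`. Both integrals are compared with the limit of `∫ ∫ mollify μ p h s v x dx dv` as
`‖s‖ → ∞`. -/
lemma integral_transport {p p' : K → K} {V : Set K} {δ : ℝ} (hp : Continuous p)
    (hd : ∀ x ∈ V, HasDerivAt p (p' x) x) (h0 : ∀ x ∈ V, p' x ≠ 0) (hδ : 0 < δ)
    (hanti : ∀ x ∈ V, ∀ y ∈ V, δ * ‖x - y‖ ≤ ‖p x - p y‖)
    {h : K → ℝ} (hc : Continuous h) (hs : HasCompactSupport h) (hV : tsupport h ⊆ V)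
    {H : K → ℝ} (H1 : ∀ x ∈ V, H (p x) = invMod μ (-p' x) * h x)
    (H2 : ∀ v ∉ p '' V, H v = 0) : ∫ v, H v ∂μ = ∫ x, h x ∂μ := by
  obtain ⟨c, hc1⟩ := NormedField.exists_one_lt_norm K
  have hc0 : c ≠ 0 := norm_pos_iff.1 (by linarith)
  have hcn : ∀ n : ℕ, c ^ n ≠ 0 := fun n => pow_ne_zero n hc0
  have hcn1 : ∀ n : ℕ, 1 ≤ ‖c ^ n‖ := fun n => by
    rw [norm_pow]; exact one_le_pow₀ hc1.le
  have hctop : Tendsto (fun n : ℕ => ‖c ^ n‖) atTop atTop := by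
    simp_rw [norm_pow]; exact tendsto_pow_atTop_atTop_of_one_lt hc1
  obtain ⟨C, hC⟩ := hc.bounded_above_of_compact_support hs
  obtain ⟨R, hR⟩ := exists_mollify_bound μ hp hs
  have hI := integral_tent_pos μ
  set I := ∫ t, tent t ∂μ with hIdef
  -- Pointwise limit in `v`.
  have hlim : ∀ v, Tendsto (fun n : ℕ => ∫ x, mollify μ p h (c ^ n) v x ∂μ) atTop
      (𝓝 (H v * I)) := by
    intro v
    by_cases hv : v ∈ p '' V
    · obtain ⟨x₀, hx₀, rfl⟩ := hv
      have hlim0 : H (p x₀) * I = ∫ t, h x₀ * tent (-p' x₀ * t) ∂μ := by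
        rw [integral_const_mul, integral_comp_mul μ (neg_ne_zero.2 (h0 x₀ hx₀)), H1 x₀ hx₀,
          NNReal.smul_def, smul_eq_mul]
        ring
      simp_rw [integral_mollify_eq μ (hcn _) (p x₀) x₀]
      rw [hlim0]
      refine tendsto_integral_of_dominated_convergence _ (fun n => ?_)
        (integrable_indicator_ball μ (2 / δ) C) (fun n => ?_) ?_
      · have := continuous_tent (K := K)
        exact (by fun_prop : Continuous _).aestronglyMeasurable
      · exact Eventually.of_forall fun t =>
          norm_integrand_le hδ hanti hV hC hx₀ (hcn n) (by simp) t
      · refine Eventually.of_forall fun t => Tendsto.mul ?_ ?_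
        · refine (hc.tendsto x₀).comp ?_
          have : Tendsto (fun n : ℕ => (c ^ n)⁻¹) atTop (𝓝 0) :=
            tendsto_inv₀_cobounded.comp (tendsto_norm_atTop_iff_cobounded.1 hctop)
          simpa using (this.mul_const t).const_add x₀
        · refine (continuous_tent.tendsto _).comp ?_
          have := ((hd x₀ hx₀).hasFDerivAt.lim t hctop).neg
          simp only [smul_eq_mul, ContinuousLinearMap.toSpanSingleton_apply] at this
          convert this using 2
          · ring
          · ring
    · -- Off the image, `v` is at positive distance from the compact set `p (tsupport h)`.
      rw [H2 v hv, zero_mul]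
      have hcl : IsClosed (p '' tsupport h) := (hs.isCompact.image hp).isClosed
      have hv' : v ∈ (p '' tsupport h)ᶜ := fun hh => hv (image_mono hV hh)
      obtain ⟨ε, hε, hball⟩ := Metric.isOpen_iff.1 hcl.isOpen_compl v hv'
      refine tendsto_const_nhds.congr' ?_
      filter_upwards [hctop.eventually_ge_atTop (1 / ε)] with n hn
      have : ∀ x, mollify μ p h (c ^ n) v x = 0 := fun x => mollify_eq_zero μ fun hx => by
        have h1 : ε ≤ ‖v - p x‖ := by
          by_contra! hlt
          refine hball (a := p x) ?_ (mem_image_of_mem p (subset_tsupport _ hx))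
          rwa [Metric.mem_ball, dist_comm, dist_eq_norm]
        rw [norm_mul]
        calc (1 : ℝ) = 1 / ε * ε := by field_simp
          _ ≤ _ := by gcongr
      simp [this]
  have hlim2 : Tendsto (fun n : ℕ => ∫ v, ∫ x, mollify μ p h (c ^ n) v x ∂μ ∂μ) atTop
      (𝓝 (∫ v, H v * I ∂μ)) := by
    refine tendsto_integral_of_dominated_convergence _ (fun n => ?_)
      (integrable_indicator_ball μ R
        (∫ t, (Metric.closedBall (0 : K) (2 / δ)).indicator (fun _ => C) t ∂μ)) (fun n => ?_)
      (Eventually.of_forall hlim)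
    · exact ((continuous_mollify μ hp hc).integrable_of_hasCompactSupport
        (μ := μ.prod μ) (hasCompactSupport_mollify μ hp hs (hcn1 n))).integral_prod_left.1
    · refine Eventually.of_forall fun v => ?_
      by_cases hv : v ∈ Metric.closedBall (0 : K) R
      · rw [indicator_of_mem hv]
        exact norm_integral_mollify_le μ hδ hanti hV hC (hcn n) v
      · rw [indicator_of_notMem hv]
        simp [hR _ (hcn1 n) v _ hv]
  simp_rw [integral_integral_mollify μ hp hc hs (hcn1 _)] at hlim2
  have := tendsto_nhds_unique tendsto_const_nhds hlim2
  rw [integral_mul_const] at this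
  exact (mul_right_cancel₀ hI.ne' this).symm

/-! ### From test functions to integrable functions -/

section extend

variable {X E : Type*} [MeasurableSpace X] [NormedAddCommGroup E] {e : X → K} {ν : Measure K}

omit [NontriviallyNormedField K] [BorelSpace K] [ProperSpace K] in
lemma integral_extend [NormedSpace ℝ E] (he : MeasurableEmbedding e) (g : X → E) :
    ∫ v, Function.extend e g 0 v ∂ν = ∫ x, g x ∂(ν.comap e) := by
  rw [← setIntegral_eq_integral_of_forall_compl_eq_zero (s := range e), ← he.map_comap,
    he.integral_map]
  · simp_rw [he.injective.extend_apply]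
  · intro v hv
    exact Function.extend_apply' _ _ _ (by simpa using hv)

omit [NontriviallyNormedField K] [BorelSpace K] [ProperSpace K] in
lemma integrable_extend_iff (he : MeasurableEmbedding e) (g : X → E) :
    Integrable (Function.extend e g 0) ν ↔ Integrable g (ν.comap e) := by
  have h1 : Function.support (Function.extend e g 0) ⊆ range e := by
    intro v hv
    by_contra hv'
    exact hv (Function.extend_apply' _ _ _ (by simpa using hv'))
  rw [← integrableOn_iff_integrable_of_support_subset h1, IntegrableOn, ← he.map_comap,
    he.integrable_map_iff,
    show Function.extend e g 0 ∘ e = g from funext fun x => he.injective.extend_apply _ _ _]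

end extend

lemma continuous_invMod_neg {p' : K → K} {V : Set K} (hp' : Continuous p')
    (h0 : ∀ x ∈ V, p' x ≠ 0) : Continuous fun x : V => invMod μ (-p' x) :=
  continuous_iff_continuousAt.2 fun x =>
    (continuousAt_invMod μ (neg_ne_zero.2 (h0 x x.2))).comp
      (f := fun x : V => -p' x) (by fun_prop)

/-- The local change of variables as an identity of measures on an open set `V` on which `p` is
differentiable, with nonvanishing derivative, and expands distances. -/
lemma comap_withDensity {p p' : K → K} {V : Set K} {δ : ℝ} (hVo : IsOpen V) (hp : Continuous p)
    (hp' : Continuous p')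
    (hd : ∀ x ∈ V, HasDerivAt p (p' x) x) (h0 : ∀ x ∈ V, p' x ≠ 0) (hδ : 0 < δ)
    (hanti : ∀ x ∈ V, ∀ y ∈ V, δ * ‖x - y‖ ≤ ‖p x - p y‖)
    (he : MeasurableEmbedding fun x : V => p x) :
    (μ.comap fun x : V => p x).withDensity (fun x => (invMod μ (-p' x) : ℝ≥0)) =
      μ.comap ((↑) : V → K) := by
  have hval : MeasurableEmbedding ((↑) : V → K) := MeasurableEmbedding.subtype_coe hVo.measurableSet
  have : LocallyCompactSpace V := hVo.locallyCompactSpace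
  have hdens := continuous_invMod_neg μ hp' h0
  have hfin : ∀ {e : V → K}, MeasurableEmbedding e → Continuous e →
      IsLocallyFiniteMeasure (μ.comap e) := by
    intro e he hec
    have : IsFiniteMeasureOnCompacts (μ.comap e) := ⟨fun Q hQ => by
      rw [he.comap_apply]; exact (hQ.image hec).measure_lt_top⟩
    exact isLocallyFiniteMeasure_of_isFiniteMeasureOnCompacts
  have := hfin he (by fun_prop)
  have := hfin hval (by fun_prop)
  have := IsLocallyFiniteMeasure.withDensity_coe (μ := μ.comap fun x : V => p x) hdens
  refine Measure.ext_of_integral_eq_on_compactlySupported fun f => ?_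
  rw [integral_withDensity_eq_integral_smul hdens.measurable, ← integral_extend he,
    ← integral_extend hval]
  have hfs := f.hasCompactSupport
  have hts : tsupport (Function.extend ((↑) : V → K) f 0) ⊆ (↑) '' tsupport f :=
    hfs.tsupport_extend_zero_subset continuous_subtype_val
  have hfc : Continuous (Function.extend ((↑) : V → K) f 0) :=
    hfs.continuous_extend_zero hVo f.continuous
  refine integral_transport μ hp hd h0 hδ hanti hfc
    ((hfs.isCompact.image continuous_subtype_val).of_isClosed_subset (isClosed_tsupport _) hts)
    (hts.trans (Subtype.coe_image_subset _ _)) ?_ ?_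
  · intro x hx
    have h1 := he.injective.extend_apply (fun x : V => invMod μ (-p' x) • f x) 0 ⟨x, hx⟩
    have h2 := hval.injective.extend_apply f 0 ⟨x, hx⟩
    simp only at h1 h2
    rw [h1, h2, NNReal.smul_def, smul_eq_mul]
  · intro v hv
    refine Function.extend_apply' _ _ _ ?_
    rintro ⟨x, rfl⟩
    exact hv (mem_image_of_mem p x.2)

/-- The local change of variables for a function `G` on the target, carried by the image of a
measurable subset `A` of an open set `V` on which `p` is injective and expanding. -/
lemma integral_piece {E : Type*} [NormedAddCommGroup E] [NormedSpace ℝ E]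
    {p p' : K → K} {V : Set K} {δ : ℝ} (hVo : IsOpen V) (hp : Continuous p)
    (hp' : Continuous p')
    (hd : ∀ x ∈ V, HasDerivAt p (p' x) x) (h0 : ∀ x ∈ V, p' x ≠ 0) (hδ : 0 < δ)
    (hanti : ∀ x ∈ V, ∀ y ∈ V, δ * ‖x - y‖ ≤ ‖p x - p y‖)
    {A : Set K} (hA : MeasurableSet A) (hAV : A ⊆ V) {F L G : K → E} (hF : IntegrableOn F A μ)
    (hL : ∀ x ∈ V, L x = invMod μ (-p' x) • F x)
    (hG : ∀ x ∈ V, G (p x) = A.indicator L x) (hG' : ∀ v ∉ p '' V, G v = 0) :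
    Integrable G μ ∧ ∫ v, G v ∂μ = ∫ x in A, F x ∂μ := by
  have hinj : InjOn p V := fun x hx y hy hxy => by
    have := hanti x hx y hy
    rw [hxy, sub_self, norm_zero] at this
    have h1 : ‖x - y‖ ≤ 0 := by
      by_contra! h
      linarith [mul_pos hδ h]
    exact sub_eq_zero.1 (norm_le_zero_iff.1 h1)
  have he : MeasurableEmbedding fun x : V => p x :=
    hp.continuousOn.measurableEmbedding hVo.measurableSet hinj
  have hval : MeasurableEmbedding ((↑) : V → K) := MeasurableEmbedding.subtype_coe hVo.measurableSet
  have hdens := continuous_invMod_neg μ hp' h0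
  have hm := comap_withDensity μ hVo hp hp' hd h0 hδ hanti he
  have hGe : G = Function.extend (fun x : V => p x)
      (fun x : V => invMod μ (-p' x) • A.indicator F x) 0 := by
    ext v
    by_cases hv : v ∈ p '' V
    · obtain ⟨x, hx, rfl⟩ := hv
      have h1 := he.injective.extend_apply
        (fun x : V => invMod μ (-p' x) • A.indicator F x) 0 ⟨x, hx⟩
      simp only at h1
      rw [h1, hG x hx]
      by_cases hxA : x ∈ A
      · simp [hxA, hL x hx]
      · simp [hxA]
    · rw [hG' v hv, Function.extend_apply']
      · rfl
      · rintro ⟨x, rfl⟩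
        exact hv (mem_image_of_mem p x.2)
  have hFe : A.indicator F = Function.extend ((↑) : V → K) (fun x : V => A.indicator F x) 0 := by
    ext v
    by_cases hv : v ∈ V
    · exact (hval.injective.extend_apply (fun x : V => A.indicator F x) 0 ⟨v, hv⟩).symm
    · rw [indicator_of_notMem (fun h => hv (hAV h)), Function.extend_apply']
      · rfl
      · rintro ⟨x, rfl⟩
        exact hv x.2
  constructor
  · rw [hGe, integrable_extend_iff he,
      ← integrable_withDensity_iff_integrable_smul hdens.measurable, hm,
      ← integrable_extend_iff hval, ← hFe]
    exact (integrable_indicator_iff hA).2 hF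
  · rw [hGe, integral_extend he, ← integral_withDensity_eq_integral_smul hdens.measurable, hm,
      ← integral_extend hval, ← hFe, integral_indicator hA]

/-! ### Gluing the local pieces -/

omit [NontriviallyNormedField K] [BorelSpace K] [ProperSpace K]
  [Measure.IsAddHaarMeasure μ] in
/-- A series of integrable functions, summable in `L¹` norm and pointwise, has integrable sum. -/
lemma integrable_of_hasSum {G : ℕ → K → ℂ} {J : K → ℂ} (hG : ∀ n, Integrable (G n) μ)
    (hsum : Summable fun n => ∫ v, ‖G n v‖ ∂μ) (hJ : ∀ v, HasSum (fun n => G n v) (J v)) :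
    Integrable J μ := by
  refine ⟨aestronglyMeasurable_of_tendsto_ae atTop (f := fun n v => ∑ i ∈ Finset.range n, G i v)
    (fun n => Finset.aestronglyMeasurable_fun_sum _ fun i _ => (hG i).1)
    (Eventually.of_forall fun v => (hJ v).tendsto_sum_nat), ?_⟩
  calc ∫⁻ v, ‖J v‖ₑ ∂μ ≤ ∫⁻ v, ∑' n, ‖G n v‖ₑ ∂μ := by
        refine lintegral_mono fun v => ?_
        rw [← (hJ v).tsum_eq]
        exact enorm_tsum_le_tsum_enorm
    _ = ∑' n, ∫⁻ v, ‖G n v‖ₑ ∂μ := lintegral_tsum fun n => (hG n).1.enorm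
    _ = ∑' n, ENNReal.ofReal (∫ v, ‖G n v‖ ∂μ) := by
        congr 1 with n
        rw [ofReal_integral_norm_eq_lintegral_enorm (hG n)]
    _ < ∞ := hsum.tsum_ofReal_lt_top

omit [MeasurableSpace K] [BorelSpace K] [ProperSpace K] in
/-- Around a point with nonzero strict derivative, a function expands distances by some `δ > 0`. -/
lemma exists_expanding {p : K → K} {a x : K} (hd : HasStrictDerivAt p a x) (ha : a ≠ 0) :
    ∃ W ∈ 𝓝 x, ∃ δ : ℝ, 0 < δ ∧ ∀ y ∈ W, ∀ z ∈ W, δ * ‖y - z‖ ≤ ‖p y - p z‖ := by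
  have ha' : 0 < ‖a‖ := norm_pos_iff.2 ha
  obtain ⟨W, hW, hap⟩ := hd.hasStrictFDerivAt.approximates_deriv_on_nhds
    (c := ‖a‖₊ / 2) (Or.inr (by simpa using ha))
  refine ⟨W, hW, ‖a‖ / 2, by positivity, fun y hy z hz => ?_⟩
  have h1 := hap y hy z hz
  simp only [ContinuousLinearMap.toSpanSingleton_apply, smul_eq_mul, NNReal.coe_div, coe_nnnorm,
    NNReal.coe_ofNat] at h1
  have h2 : ‖(y - z) * a‖ ≤ ‖p y - p z‖ + ‖p y - p z - (y - z) * a‖ := by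
    simpa using norm_sub_le (p y - p z) (p y - p z - (y - z) * a)
  rw [norm_mul] at h2
  linarith

end PolyCoarea

open PolyCoarea Set in
/-- Let `K` be a local field with Haar measure `μ`, let `ψ ∈ K[X]`
have non-zero derivative, and let `f` be a Fubini function on `K × K`.  Then
`J(v) = Σ_{ω : ψ(ω)=v, ψ′(ω)≠0} ∫_K f(ω, −ψ′(ω)u) du` is Haar integrable on `K`, with
`∫_K J(v) dv = ∫_K ∫_K f(ω,u) dω du`. -/
theorem statement19 {K : Type} [NontriviallyNormedField K] [MeasurableSpace K]
    [BorelSpace K] [LocallyCompactSpace K] (μ : Measure K) [Measure.IsAddHaarMeasure μ]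
    (ψ : Polynomial K) (hψ : Polynomial.derivative ψ ≠ 0)
    (f : K × K → ℂ)
    (hint : Integrable f (μ.prod μ))
    (hsec1 : ∀ ω : K, Integrable (fun u => f (ω, u)) μ)
    (hsec2 : ∀ u : K, Integrable (fun ω => f (ω, u)) μ)
    (hrep1 : Integrable (fun ω => ∫ u, f (ω, u) ∂μ) μ)
    (hrep2 : Integrable (fun u => ∫ ω, f (ω, u) ∂μ) μ)
    (heq : (∫ ω, ∫ u, f (ω, u) ∂μ ∂μ) = ∫ u, ∫ ω, f (ω, u) ∂μ ∂μ) :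
    Integrable (fun v => ∑ᶠ ω ∈ {ω : K | Polynomial.eval ω ψ = v ∧
        Polynomial.eval ω (Polynomial.derivative ψ) ≠ 0},
        ∫ u, f (ω, -(Polynomial.eval ω (Polynomial.derivative ψ)) * u) ∂μ) μ ∧
    (∫ v, ∑ᶠ ω ∈ {ω : K | Polynomial.eval ω ψ = v ∧
        Polynomial.eval ω (Polynomial.derivative ψ) ≠ 0},
        ∫ u, f (ω, -(Polynomial.eval ω (Polynomial.derivative ψ)) * u) ∂μ ∂μ)
      = ∫ u, ∫ ω, f (ω, u) ∂μ ∂μ := by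
  have : ProperSpace K := ProperSpace.of_locallyCompactSpace K
  obtain ⟨F, hFdef⟩ : ∃ F : K → ℂ, F = fun ω => ∫ u, f (ω, u) ∂μ := ⟨_, rfl⟩
  obtain ⟨L, hLdef⟩ : ∃ L : K → ℂ,
    L = fun ω => ∫ u, f (ω, -(eval ω (derivative ψ)) * u) ∂μ := ⟨_, rfl⟩
  obtain ⟨U, hUdef⟩ : ∃ U : Set K, U = {ω | eval ω (derivative ψ) ≠ 0} := ⟨_, rfl⟩
  rw [← heq]
  change Integrable (fun v => ∑ᶠ ω ∈ {ω : K | eval ω ψ = v ∧ eval ω (derivative ψ) ≠ 0},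
    (fun ω => ∫ u, f (ω, -(eval ω (derivative ψ)) * u) ∂μ) ω) μ ∧
    (∫ v, ∑ᶠ ω ∈ {ω : K | eval ω ψ = v ∧ eval ω (derivative ψ) ≠ 0},
      (fun ω => ∫ u, f (ω, -(eval ω (derivative ψ)) * u) ∂μ) ω ∂μ) =
    ∫ ω, (fun ω => ∫ u, f (ω, u) ∂μ) ω ∂μ
  rw [← hFdef, ← hLdef]
  have hF : Integrable F μ := hFdef ▸ hrep1
  have hLF : ∀ ω ∈ U, L ω = invMod μ (-(eval ω (derivative ψ))) • F ω := fun ω hω => by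
    rw [hUdef] at hω
    rw [hLdef, hFdef]
    exact integral_comp_mul μ (neg_ne_zero.2 hω) fun u => f (ω, u)
  have hp : Continuous fun x => eval x ψ := ψ.continuous
  have hp' : Continuous fun x => eval x (derivative ψ) := (derivative ψ).continuous
  have hUc : Uᶜ.Finite := by
    refine (Polynomial.finite_setOfPred_isRoot hψ).subset fun x hx => ?_
    simpa [hUdef] using hx
  have hUo : IsOpen U := by
    rw [← compl_compl U]
    exact hUc.isClosed.isOpen_compl
  have hUne : U.Nonempty := by
    by_contra h
    rw [not_nonempty_iff_eq_empty] at h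
    rw [h, compl_empty] at hUc
    have : Infinite K := NontriviallyNormedField.infinite K
    exact infinite_univ hUc
  -- A countable cover of `U` by open sets on which `ψ` is expanding.
  have hloc : ∀ x, ∃ V : Set K, x ∈ U → IsOpen V ∧ x ∈ V ∧ V ⊆ U ∧ ∃ δ : ℝ, 0 < δ ∧
      ∀ y ∈ V, ∀ z ∈ V, δ * ‖y - z‖ ≤ ‖eval y ψ - eval z ψ‖ := by
    intro x
    by_cases hx : x ∈ U
    · obtain ⟨W, hW, δ, hδ, hWδ⟩ := exists_expanding (ψ.hasStrictDerivAt x)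
        (by simpa [hUdef] using hx)
      obtain ⟨V, hVW, hVo, hxV⟩ := mem_nhds_iff.1 (Filter.inter_mem hW (hUo.mem_nhds hx))
      exact ⟨V, fun _ => ⟨hVo, hxV, fun y hy => (hVW hy).2, δ, hδ, fun y hy z hz =>
        hWδ y (hVW hy).1 z (hVW hz).1⟩⟩
    · exact ⟨∅, fun h => absurd h hx⟩
  choose V₀ hV₀ using hloc
  obtain ⟨t, htU, htc, htcov⟩ := TopologicalSpace.countable_cover_nhdsWithin (f := V₀) (s := U)
    fun x hx => mem_nhdsWithin_of_mem_nhds ((hV₀ x hx).1.mem_nhds (hV₀ x hx).2.1)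
  have htne : t.Nonempty := by
    obtain ⟨x, hx⟩ := hUne
    obtain ⟨i, hi, -⟩ := mem_iUnion₂.1 (htcov hx)
    exact ⟨i, hi⟩
  obtain ⟨c, hc⟩ := htc.exists_eq_range htne
  have hcU : ∀ n, c n ∈ U := fun n => htU (hc ▸ mem_range_self n)
  obtain ⟨V, hVdef⟩ : ∃ V : ℕ → Set K, V = fun n => V₀ (c n) := ⟨_, rfl⟩
  have hV : ∀ n, IsOpen (V n) ∧ V n ⊆ U ∧ ∃ δ : ℝ, 0 < δ ∧
      ∀ y ∈ V n, ∀ z ∈ V n, δ * ‖y - z‖ ≤ ‖eval y ψ - eval z ψ‖ := fun n => by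
    obtain ⟨h1, -, h2, h3⟩ := hV₀ (c n) (hcU n)
    rw [hVdef]
    exact ⟨h1, h2, h3⟩
  have hVU : ⋃ n, V n = U := by
    refine Subset.antisymm (iUnion_subset fun n => (hV n).2.1) fun x hx => ?_
    obtain ⟨i, hi, hxi⟩ := mem_iUnion₂.1 (htcov hx)
    rw [hc] at hi
    obtain ⟨n, rfl⟩ := hi
    exact mem_iUnion.2 ⟨n, by rw [hVdef]; exact hxi⟩
  obtain ⟨A, hAdef⟩ : ∃ A : ℕ → Set K, A = disjointed V := ⟨_, rfl⟩
  have hAm : ∀ n, MeasurableSet (A n) := fun n => by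
    rw [hAdef]; exact MeasurableSet.disjointed (fun i => (hV i).1.measurableSet) n
  have hAV : ∀ n, A n ⊆ V n := fun n => by rw [hAdef]; exact disjointed_subset V n
  have hAd : Pairwise (Function.onFun Disjoint A) := by rw [hAdef]; exact disjoint_disjointed V
  have hAU : ⋃ n, A n = U := by rw [hAdef, iUnion_disjointed, hVU]
  -- The fibres of `ψ` are finite, because `ψ - v` has nonzero derivative.
  have hfib : ∀ v, {ω : K | eval ω ψ = v ∧ eval ω (derivative ψ) ≠ 0}.Finite := fun v => by
    have hne : ψ - C v ≠ 0 := fun h => hψ (by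
      have := congrArg derivative h
      simpa using this)
    refine (Polynomial.finite_setOfPred_isRoot hne).subset fun x hx => ?_
    simp [hx.1]
  obtain ⟨G, hGdef⟩ : ∃ G : ℕ → K → ℂ,
    G = fun n v => ∑ ω ∈ (hfib v).toFinset, (A n).indicator L ω := ⟨_, rfl⟩
  have hsumJ : ∀ v, HasSum (fun n => G n v)
      (∑ᶠ ω ∈ {ω : K | eval ω ψ = v ∧ eval ω (derivative ψ) ≠ 0}, L ω) := fun v => by
    rw [finsum_mem_eq_finite_toFinset_sum _ (hfib v), hGdef]
    refine hasSum_sum fun ω hω => ?_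
    have hωU : ω ∈ ⋃ n, A n := by
      rw [hAU, hUdef]
      exact ((hfib v).mem_toFinset.1 hω).2
    obtain ⟨n, hn⟩ := mem_iUnion.1 hωU
    have := hasSum_single (f := fun m => (A m).indicator L ω) n fun m hm =>
      indicator_of_notMem (fun h => (hAd hm).le_bot ⟨h, hn⟩) L
    simpa only [indicator_of_mem hn] using this
  have hG1 : ∀ n, ∀ x ∈ V n, G n (eval x ψ) = (A n).indicator L x := fun n x hx => by
    rw [hGdef]
    refine Finset.sum_eq_single x (fun ω hω hne => ?_) fun hx' => ?_
    · refine indicator_of_notMem (fun hωA => hne ?_) L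
      obtain ⟨-, -, δ, hδ, hanti⟩ := hV n
      have h1 := hanti ω (hAV n hωA) x hx
      rw [((hfib _).mem_toFinset.1 hω).1, sub_self, norm_zero] at h1
      exact sub_eq_zero.1 (norm_le_zero_iff.1 (by
        by_contra! h
        linarith [mul_pos hδ h]))
    · refine absurd ((hfib _).mem_toFinset.2 ⟨rfl, ?_⟩) hx'
      have := (hV n).2.1 hx
      rw [hUdef] at this
      exact this
  have hG2 : ∀ n, ∀ v ∉ (fun x => eval x ψ) '' V n, G n v = 0 := fun n v hv => by
    rw [hGdef]
    refine Finset.sum_eq_zero fun ω hω => indicator_of_notMem (fun hωA => hv ?_) L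
    exact ⟨ω, hAV n hωA, ((hfib v).mem_toFinset.1 hω).1⟩
  have hpiece : ∀ n, (Integrable (G n) μ ∧ ∫ v, G n v ∂μ = ∫ x in A n, F x ∂μ) ∧
      ∫ v, ‖G n v‖ ∂μ = ∫ x in A n, ‖F x‖ ∂μ := fun n => by
    obtain ⟨hVo, hVU, δ, hδ, hanti⟩ := hV n
    have h0 : ∀ x ∈ V n, eval x (derivative ψ) ≠ 0 := fun x hx => by
      have := hVU hx
      rw [hUdef] at this
      exact this
    refine ⟨integral_piece μ hVo hp hp' (fun x _ => ψ.hasDerivAt x) h0 hδ hanti (hAm n) (hAV n)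
      hF.integrableOn (fun x hx => hLF x (hVU hx)) (hG1 n) (hG2 n),
      (integral_piece μ hVo hp hp' (fun x _ => ψ.hasDerivAt x) h0 hδ hanti (hAm n) (hAV n)
        (F := fun x => ‖F x‖) (L := fun x => ‖L x‖) (G := fun v => ‖G n v‖)
        hF.norm.integrableOn (fun x hx => ?_) (fun x hx => ?_) fun v hv => ?_).2⟩
    · rw [hLF x (hVU hx), NNReal.smul_def, norm_smul, NNReal.smul_def, NNReal.norm_eq, smul_eq_mul]
    · rw [hG1 n x hx, norm_indicator_eq_indicator_norm]
    · rw [hG2 n v hv, norm_zero]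
  have hsumN : Summable fun n => ∫ v, ‖G n v‖ ∂μ := by
    simp_rw [fun n => (hpiece n).2]
    exact (hasSum_integral_iUnion hAm hAd hF.norm.integrableOn).summable
  refine ⟨integrable_of_hasSum μ (fun n => (hpiece n).1.1) hsumN hsumJ, ?_⟩
  have h1 := hasSum_integral_of_summable_integral_norm (fun n => (hpiece n).1.1) hsumN
  simp_rw [fun v => (hsumJ v).tsum_eq, fun n => (hpiece n).1.2] at h1
  have h2 := hasSum_integral_iUnion hAm hAd (f := F) (μ := μ) hF.integrableOn
  rw [h1.unique h2, hAU]
  -- The zeros of `ψ'` form a finite, hence null, set.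
  refine setIntegral_eq_integral_of_ae_compl_eq_zero ?_
  have hnull : μ Uᶜ = 0 := hUc.measure_zero μ
  filter_upwards [measure_eq_zero_iff_ae_notMem.1 hnull] with x hx hxU
  exact absurd hxU hx
end
end
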